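/- arXiv:1505.03575 — 13 statements merged into one kernel-verified Lean document; each statement's English description precedes it below -/
import Mathlib

section
/- For quaternions α, β, c, the equation αx − xβ = c has a unique solution x ∈ ℍ if and only if P_{α,β} := |α|² − (α + ᾱ)β + β² ≠ 0; in that case the unique solution is x = (ᾱc − cβ) · P_{α,β}⁻¹. -/
open Quaternion

lemma syl_key (α β x : ℍ[ℝ]) :
    star α * (α * x - x * β) - (α * x - x * β) * β
      = x * (((Quaternion.normSq α : ℝ) : ℍ[ℝ]) - (α + star α) * β + β ^ 2) ∧
    α * (star α * x - x * β) - (star α * x - x * β) * β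
      = x * (((Quaternion.normSq α : ℝ) : ℍ[ℝ]) - (α + star α) * β + β ^ 2) := by
  have h1 : star α * α = ((Quaternion.normSq α : ℝ) : ℍ[ℝ]) := Quaternion.star_mul_self α
  have h2 : α * star α = ((Quaternion.normSq α : ℝ) : ℍ[ℝ]) := Quaternion.self_mul_star α
  have h3 : x * ((Quaternion.normSq α : ℝ) : ℍ[ℝ]) = ((Quaternion.normSq α : ℝ) : ℍ[ℝ]) * x :=
    (Quaternion.coe_commutes _ _).symm
  have h4 : x * (α + star α) = (α + star α) * x := by
    rw [Quaternion.self_add_star]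
    have := Quaternion.coe_commutes (2 * α.re) x
    push_cast at this
    exact this.symm
  have e : x * (((Quaternion.normSq α : ℝ) : ℍ[ℝ]) - (α + star α) * β + β ^ 2)
      = ((Quaternion.normSq α : ℝ) : ℍ[ℝ]) * x - (α + star α) * x * β + x * β ^ 2 := by
    rw [mul_add, mul_sub, h3, ← mul_assoc x, h4]
  rw [e]
  constructor
  · rw [← h1]; noncomm_ring
  · rw [← h2]; noncomm_ring

lemma syl_ker (α β : ℍ[ℝ])
    (hP : ((Quaternion.normSq α : ℝ) : ℍ[ℝ]) - (α + star α) * β + β ^ 2 = 0) :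
    ∃ z : ℍ[ℝ], z ≠ 0 ∧ α * z - z * β = 0 := by
  by_cases h : ∃ y : ℍ[ℝ], star α * y - y * β ≠ 0
  · obtain ⟨y, hy⟩ := h
    refine ⟨_, hy, ?_⟩
    rw [(syl_key α β y).2, hP, mul_zero]
  · push Not at h
    have hb : star α = β := by simpa [sub_eq_zero] using h 1
    subst hb
    obtain ⟨i, a1, a2, a3, a4⟩ : ∃ i : ℍ[ℝ], i.re = 0 ∧ i.imI = 1 ∧ i.imJ = 0 ∧ i.imK = 0 :=
      ⟨⟨0, 1, 0, 0⟩, rfl, rfl, rfl, rfl⟩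
    obtain ⟨j, b1, b2, b3, b4⟩ : ∃ j : ℍ[ℝ], j.re = 0 ∧ j.imI = 0 ∧ j.imJ = 1 ∧ j.imK = 0 :=
      ⟨⟨0, 0, 1, 0⟩, rfl, rfl, rfl, rfl⟩
    have i1 := congrArg (fun q : ℍ[ℝ] => q.imJ) (h i)
    have i2 := congrArg (fun q : ℍ[ℝ] => q.imK) (h i)
    have i3 := congrArg (fun q : ℍ[ℝ] => q.imK) (h j)
    simp [a1, a2, a3, a4, b1, b2, b3, b4] at i1 i2 i3
    refine ⟨1, one_ne_zero, ?_⟩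
    ext <;> simp <;> linarith

/-- For quaternions `α, β, c`, the equation `αx − xβ = c` has a unique
solution `x ∈ ℍ` if and only if `P = |α|² − (α + ᾱ)β + β² ≠ 0`; in that case the unique
solution is `x = (ᾱc − cβ) * P⁻¹`. -/
theorem sylvester_scalar_unique (α β c : ℍ[ℝ])
    (P : ℍ[ℝ]) (hP : P = ((Quaternion.normSq α : ℝ) : ℍ[ℝ]) - (α + star α) * β + β ^ 2) :
    ((∃! x : ℍ[ℝ], α * x - x * β = c) ↔ P ≠ 0) ∧
      (P ≠ 0 → ∀ x : ℍ[ℝ], α * x - x * β = c ↔ x = (star α * c - c * β) * P⁻¹) := by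
  have main : P ≠ 0 → ∀ x : ℍ[ℝ], α * x - x * β = c ↔ x = (star α * c - c * β) * P⁻¹ := by
    intro h0 x
    have hc : P * β = β * P := by
      have h4 : β * (α + star α) = (α + star α) * β := by
        rw [Quaternion.self_add_star]
        have := Quaternion.coe_commutes (2 * α.re) β
        push_cast at this
        exact this.symm
      have h3 := Quaternion.coe_commutes (Quaternion.normSq α) β
      rw [hP, add_mul, sub_mul, mul_add, mul_sub, h3, ← mul_assoc β, h4, pow_two, mul_assoc β]
    have hci : P⁻¹ * β = β * P⁻¹ := (Commute.inv_left₀ (show Commute P β from hc)).eq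
    constructor
    · intro h
      rw [eq_mul_inv_iff_mul_eq₀ h0, ← h, (syl_key α β x).1, hP]
    · rintro rfl
      rw [mul_assoc _ P⁻¹ β, hci, ← mul_assoc, ← mul_assoc, ← sub_mul, (syl_key α β c).2, ← hP,
        mul_inv_cancel_right₀ h0]
  refine ⟨⟨?_, ?_⟩, main⟩
  · rintro ⟨x, hx, hu⟩ h0
    obtain ⟨z, hz, hk⟩ := syl_ker α β (hP ▸ h0)
    have := hu (x + z) (by
      have e : α * (x + z) - (x + z) * β = (α * x - x * β) + (α * z - z * β) := by noncomm_ring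
      show α * (x + z) - (x + z) * β = c
      rw [e, hk, add_zero]; exact hx)
    exact hz (by simpa using this)
  · intro h0
    exact ⟨_, (main h0 _).2 rfl, fun y hy => (main h0 y).1 hy⟩
end

section
/- Let A ∈ ℍ^{n×n} and B ∈ ℍ^{m×m}. The Sylvester equation AX − XB = C has a unique solution X ∈ ℍ^{n×m} for every right-hand side C ∈ ℍ^{n×m} (equivalently, the real-linear map X ↦ AX − XB on ℍ^{n×m} is bijective) if and only if σ_r(A) ∩ σ_r(B) = ∅. -/
open Quaternion Matrix

/-- The right spectrum of a square quaternion matrix: the set of `α ∈ ℍ` for which there is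
a nonzero vector `x` with `Mx = xα`. -/
def rightSpectrum {n : ℕ} (M : Matrix (Fin n) (Fin n) ℍ[ℝ]) : Set ℍ[ℝ] :=
  {α : ℍ[ℝ] | ∃ x : Fin n → ℍ[ℝ], x ≠ 0 ∧ M.mulVec x = fun i => x i * α}

open Polynomial in
lemma syl_aeval_comm {n m : ℕ} (A : Matrix (Fin n) (Fin n) ℍ[ℝ]) (B : Matrix (Fin m) (Fin m) ℍ[ℝ])
    (X : Matrix (Fin n) (Fin m) ℍ[ℝ]) (h : A * X = X * B) (p : ℝ[X]) :
    aeval A p * X = X * aeval B p := by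
  induction p using Polynomial.induction_on' with
  | add p q hp hq => simp [Matrix.add_mul, Matrix.mul_add, hp, hq]
  | monomial k a =>
    have hk : A ^ k * X = X * B ^ k := by
      induction k with
      | zero => simp
      | succ k ih =>
        rw [pow_succ, pow_succ, Matrix.mul_assoc, h, ← Matrix.mul_assoc, ih, Matrix.mul_assoc]
    rw [aeval_monomial, aeval_monomial, ← Algebra.smul_def, ← Algebra.smul_def,
      Matrix.smul_mul, Matrix.mul_smul, hk]

open Polynomial in
lemma syl_exists_irreducible {n : ℕ} (A : Matrix (Fin n) (Fin n) ℍ[ℝ]) (p : ℝ[X]) (hp : p ≠ 0) :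
    (∃ x, x ≠ 0 ∧ (aeval A p).mulVec x = 0) →
    ∃ q, Irreducible q ∧ q ∣ p ∧ ∃ x, x ≠ 0 ∧ (aeval A q).mulVec x = 0 := by
  induction p using WfDvdMonoid.induction_on_irreducible with
  | zero => exact absurd rfl hp
  | unit u hu =>
    rintro ⟨x, hx, h⟩
    obtain ⟨v, hv⟩ := hu.exists_left_inv
    exfalso
    apply hx
    have := congrArg (fun y => (aeval A v).mulVec y) h
    simpa [Matrix.mulVec_mulVec, ← map_mul, hv] using this
  | mul a i ha hi ih =>
    rintro ⟨x, hx, h⟩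
    rw [map_mul, ← Matrix.mulVec_mulVec] at h
    by_cases h0 : (aeval A a).mulVec x = 0
    · obtain ⟨q, hq, hd, h1⟩ := ih ha ⟨x, hx, h0⟩
      exact ⟨q, hq, hd.mul_left _, h1⟩
    · exact ⟨i, hi, dvd_mul_right _ _, _, h0, h⟩

/-- The quaternion with given coordinates. -/
def sylQ (a b c d : ℝ) : ℍ[ℝ] := ⟨a, b, c, d⟩

lemma sylQ_re (a b c d : ℝ) : (sylQ a b c d).re = a := rfl
lemma sylQ_imI (a b c d : ℝ) : (sylQ a b c d).imI = b := rfl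
lemma sylQ_imJ (a b c d : ℝ) : (sylQ a b c d).imJ = c := rfl
lemma sylQ_imK (a b c d : ℝ) : (sylQ a b c d).imK = d := rfl

open Polynomial in
lemma syl_mem_spectrum {n : ℕ} (A : Matrix (Fin n) (Fin n) ℍ[ℝ]) (q : ℝ[X]) (z : ℂ)
    (hq : q ∣ X ^ 2 - C (2 * z.re) * X + C (z.re ^ 2 + z.im ^ 2))
    (h : ∃ x, x ≠ 0 ∧ (aeval A q).mulVec x = 0) :
    sylQ z.re z.im 0 0 ∈ rightSpectrum A := by
  obtain ⟨x, hx, h⟩ := h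
  obtain ⟨s, hs⟩ := hq
  have h2 : (aeval A (X ^ 2 - C (2 * z.re) * X + C (z.re ^ 2 + z.im ^ 2))).mulVec x = 0 := by
    rw [hs, mul_comm, map_mul, ← Matrix.mulVec_mulVec, h, Matrix.mulVec_zero]
  have h3 : A.mulVec (A.mulVec x) = (2 * z.re) • A.mulVec x - (z.re ^ 2 + z.im ^ 2) • x := by
    simp only [map_add, map_sub, map_mul, aeval_C, aeval_X, 
      Matrix.add_mulVec, Matrix.sub_mulVec, Matrix.smul_mulVec, Algebra.algebraMap_eq_smul_one,
      Matrix.one_mulVec, pow_two, ← Matrix.mulVec_mulVec, smul_mul_assoc, one_mul] at h2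
    have := eq_sub_of_add_eq h2
    rw [zero_sub, sub_eq_iff_eq_add] at this
    rw [this]
    module
  by_cases h0 : A.mulVec x = fun i => x i * sylQ z.re z.im 0 0
  · exact ⟨x, hx, h0⟩
  have hmul : ∀ (v : Fin n → ℍ[ℝ]) (a : ℍ[ℝ]),
      A.mulVec (fun i => v i * a) = fun i => A.mulVec v i * a := by
    intro v a
    ext1 i
    simp [Matrix.mulVec, dotProduct, Finset.sum_mul, mul_assoc]
  refine ⟨fun i => (A.mulVec x - fun i => x i * sylQ z.re z.im 0 0) i * sylQ 0 0 1 0, ?_, ?_⟩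
  · intro hc
    apply h0
    ext1 i
    have := congrFun hc i
    rw [Pi.zero_apply, mul_eq_zero] at this
    rcases this with h | h
    · exact sub_eq_zero.1 h
    · have := congrArg QuaternionAlgebra.imJ h
      simp [sylQ_imJ] at this
  · rw [hmul, Matrix.mulVec_sub, hmul, h3]
    ext1 i
    simp only [Pi.sub_apply, Pi.smul_apply]
    generalize A.mulVec x i = u
    generalize x i = w
    ext <;> simp [sylQ_re, sylQ_imI, sylQ_imJ, sylQ_imK] <;> ring

open Polynomial in
lemma syl_root (q : ℝ[X]) (hq : Irreducible q) :
    ∃ z : ℂ, q ∣ X ^ 2 - C (2 * z.re) * X + C (z.re ^ 2 + z.im ^ 2) := by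
  obtain ⟨z, hz⟩ := IsAlgClosed.exists_aeval_eq_zero ℂ q hq.degree_pos.ne'
  refine ⟨z, ?_⟩
  have h1 : minpoly ℝ z ∣ X ^ 2 - C (2 * z.re) * X + C (z.re ^ 2 + z.im ^ 2) := by
    apply minpoly.dvd
    simp only [map_add, map_sub, map_mul, aeval_C, aeval_X, map_pow]
    apply Complex.ext <;> simp [pow_two] <;> ring
  exact ((minpoly.irreducible (Algebra.IsIntegral.isIntegral z)).associated_of_dvd hq
    (minpoly.dvd _ _ hz)).symm.dvd.trans h1

/-- The Sylvester operator. -/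
noncomputable def sylOp {n m : ℕ} (A : Matrix (Fin n) (Fin n) ℍ[ℝ]) (B : Matrix (Fin m) (Fin m) ℍ[ℝ]) :
    Matrix (Fin n) (Fin m) ℍ[ℝ] →ₗ[ℝ] Matrix (Fin n) (Fin m) ℍ[ℝ] where
  toFun X := A * X - X * B
  map_add' X Y := by rw [Matrix.mul_add, Matrix.add_mul]; abel
  map_smul' r X := by simp [smul_sub]

/-- The operator `w ↦ Aw - wα`. -/
noncomputable def sylVec {n : ℕ} (A : Matrix (Fin n) (Fin n) ℍ[ℝ]) (a : ℍ[ℝ]) :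
    (Fin n → ℍ[ℝ]) →ₗ[ℝ] (Fin n → ℍ[ℝ]) where
  toFun w := A.mulVec w - fun i => w i * a
  map_add' v w := by
    ext1 i
    simp only [Matrix.mulVec_add, Pi.add_apply, Pi.sub_apply, add_mul]; abel
  map_smul' r v := by
    ext1 i
    simp [Matrix.mulVec_smul, smul_sub]

/-- The Sylvester equation `AX − XB = C` has a unique solution
`X ∈ ℍ^{n×m}` for every right-hand side `C` if and only if `σ_r(A) ∩ σ_r(B) = ∅`. -/
theorem sylvester_unique_iff_spectra_disjoint (n m : ℕ)
    (A : Matrix (Fin n) (Fin n) ℍ[ℝ]) (B : Matrix (Fin m) (Fin m) ℍ[ℝ]) :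
    (∀ C : Matrix (Fin n) (Fin m) ℍ[ℝ],
        ∃! X : Matrix (Fin n) (Fin m) ℍ[ℝ], A * X - X * B = C) ↔
      rightSpectrum A ∩ rightSpectrum B = ∅ := by
  constructor
  · intro h
    rw [Set.eq_empty_iff_forall_notMem]
    rintro a ⟨⟨x, hx, hAx⟩, ⟨y, hy, hBy⟩⟩
    have hsurj : Function.Surjective (sylVec A a) := by
      intro c
      obtain ⟨j, hj⟩ := Function.ne_iff.1 hy
      have hj : y j ≠ 0 := hj
      obtain ⟨X, hX, -⟩ := h (Matrix.of fun i k => if k = j then c i * (y j)⁻¹ else 0)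
      refine ⟨X.mulVec y, ?_⟩
      have := congrArg (fun M => M.mulVec y) hX
      simp only [Matrix.sub_mulVec, ← Matrix.mulVec_mulVec, hBy] at this
      have h1 : X.mulVec (fun i => y i * a) = fun i => X.mulVec y i * a := by
        ext1 i
        simp [Matrix.mulVec, dotProduct, Finset.sum_mul, mul_assoc]
      rw [h1] at this
      refine this.trans ?_
      ext1 i
      simp [Matrix.mulVec, dotProduct, ite_mul, mul_assoc, hj]
    have hinj := LinearMap.injective_iff_surjective.2 hsurj
    apply hx
    apply hinj
    rw [map_zero]
    exact sub_eq_zero.2 hAx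
  · intro h
    have hinj : Function.Injective (sylOp A B) := by
      rw [injective_iff_map_eq_zero]
      intro X hX
      by_contra hX0
      have hAX : A * X = X * B := sub_eq_zero.1 hX
      have hint : IsIntegral ℝ B := Algebra.IsIntegral.isIntegral B
      have key := syl_aeval_comm A B X hAX (minpoly ℝ B)
      rw [minpoly.aeval, Matrix.mul_zero] at key
      have hcol : ∀ {k l : ℕ} (M : Matrix (Fin k) (Fin l) ℍ[ℝ]), M ≠ 0 →
          ∃ v, M.mulVec v ≠ 0 := by
        intro k l M hM
        by_contra! hc
        apply hM
        ext1 i j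
        have := congrFun (hc (Pi.single j 1)) i
        simpa using this
      obtain ⟨v, hv⟩ := hcol X hX0
      obtain ⟨q, hq, ⟨s, hs⟩, hqA⟩ := syl_exists_irreducible A (minpoly ℝ B) (minpoly.ne_zero hint)
        ⟨_, hv, by rw [Matrix.mulVec_mulVec, key, Matrix.zero_mulVec]⟩
      have hsB : Polynomial.aeval B s ≠ 0 := by
        intro h0
        have hd := minpoly.dvd ℝ B h0
        have hs0 : s ≠ 0 := by
          rintro rfl
          exact minpoly.ne_zero hint (by rw [hs, mul_zero])
        rw [hs] at hd
        obtain ⟨t, ht⟩ := hd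
        apply hq.not_isUnit
        refine IsUnit.of_mul_eq_one t (mul_left_cancel₀ hs0 ?_)
        rw [mul_one]
        conv_rhs => rw [ht]
        ring
      obtain ⟨w, hw⟩ := hcol _ hsB
      have hqB : ∃ x, x ≠ 0 ∧ (Polynomial.aeval B q).mulVec x = 0 :=
        ⟨_, hw, by rw [Matrix.mulVec_mulVec, ← map_mul, ← hs, minpoly.aeval, Matrix.zero_mulVec]⟩
      obtain ⟨z, hz⟩ := syl_root q hq
      exact (Set.eq_empty_iff_forall_notMem.1 h) _
        ⟨syl_mem_spectrum A q z hz hqA, syl_mem_spectrum B q z hz hqB⟩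
    have hsurj := LinearMap.injective_iff_surjective.1 hinj
    intro C
    obtain ⟨X, hX⟩ := hsurj C
    exact ⟨X, hX, fun Y hY => hinj (hY.trans hX.symm)⟩
end

section
/- Let A = 𝒥_n(α) and B = 𝒥_m(β)ᵀ be quaternion Jordan blocks with α not conjugate to β, equivalently P_{α,β} := |α|² − (α + ᾱ)β + β² ≠ 0. Then for every C ∈ ℍ^{n×m} the equation AX − XB = C has a unique solution, given by X = Σ_{k=0}^{n+m−2} ( Σ_{i=0}^{k+1} (−1)^{k+i} binom(k+1, i) ᾱ^{k−i+1} M_k β^i ) · P_{α,β}^{−(k+1)}, where M_k = Σ_{ℓ=0}^{k} (−1)^ℓ binom(k, ℓ) F_n^{k−ℓ} C (F_mᵀ)^ℓ for k = 0, …, n+m−2. -/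
open Quaternion Matrix

/-- The matrix `F_n` with ones on the first subdiagonal and zeros elsewhere. -/
noncomputable def subdiagOne (n : ℕ) : Matrix (Fin n) (Fin n) ℍ[ℝ] :=
  Matrix.of fun i j => if (i : ℕ) = (j : ℕ) + 1 then 1 else 0

/-- The lower triangular Jordan block `𝒥_n(α) = αI_n + F_n`. -/
noncomputable def jordanBlockQ (n : ℕ) (a : ℍ[ℝ]) : Matrix (Fin n) (Fin n) ℍ[ℝ] :=
  Matrix.diagonal (fun _ => a) + subdiagOne n

namespace SylvAux

/-- Left multiplication as a real-linear operator. -/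
noncomputable def opL {n : ℕ} (m : ℕ) (A : Matrix (Fin n) (Fin n) ℍ[ℝ]) :
    Module.End ℝ (Matrix (Fin n) (Fin m) ℍ[ℝ]) where
  toFun X := A * X
  map_add' X Y := Matrix.mul_add A X Y
  map_smul' c X := by simp

/-- Right multiplication as a real-linear operator. -/
noncomputable def opR (n : ℕ) {m : ℕ} (B : Matrix (Fin m) (Fin m) ℍ[ℝ]) :
    Module.End ℝ (Matrix (Fin n) (Fin m) ℍ[ℝ]) where
  toFun X := X * B
  map_add' X Y := Matrix.add_mul X Y B
  map_smul' c X := by simp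

variable {n m : ℕ}

lemma opL_apply (A : Matrix (Fin n) (Fin n) ℍ[ℝ]) (X : Matrix (Fin n) (Fin m) ℍ[ℝ]) :
    opL m A X = A * X := rfl

lemma opR_apply (B : Matrix (Fin m) (Fin m) ℍ[ℝ]) (X : Matrix (Fin n) (Fin m) ℍ[ℝ]) :
    opR n B X = X * B := rfl

lemma opL_mul (A B : Matrix (Fin n) (Fin n) ℍ[ℝ]) : opL m (A * B) = opL m A * opL m B := by
  ext1 X; simp [opL_apply, Matrix.mul_assoc]

lemma opR_mul (A B : Matrix (Fin m) (Fin m) ℍ[ℝ]) : opR n (A * B) = opR n B * opR n A := by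
  ext1 X; simp [opR_apply, Matrix.mul_assoc]

lemma opL_pow (A : Matrix (Fin n) (Fin n) ℍ[ℝ]) (k : ℕ) : opL m (A ^ k) = opL m A ^ k := by
  induction k with
  | zero => ext1 X; simp [opL_apply]
  | succ k ih => rw [pow_succ, opL_mul, ih, pow_succ]

lemma opR_pow (A : Matrix (Fin m) (Fin m) ℍ[ℝ]) (k : ℕ) : opR n (A ^ k) = opR n A ^ k := by
  induction k with
  | zero => ext1 X; simp [opR_apply]
  | succ k ih => rw [pow_succ', opR_mul, ih, pow_succ]

lemma comm_LR (A : Matrix (Fin n) (Fin n) ℍ[ℝ]) (B : Matrix (Fin m) (Fin m) ℍ[ℝ]) :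
    Commute (opL m A) (opR n B) := by
  ext1 X; simp [opL_apply, opR_apply, Matrix.mul_assoc]

lemma comm_LL {A B : Matrix (Fin n) (Fin n) ℍ[ℝ]} (h : Commute A B) :
    Commute (opL m A) (opL m B) := by
  unfold Commute SemiconjBy; rw [← opL_mul, ← opL_mul, h.eq]

lemma comm_RR {A B : Matrix (Fin m) (Fin m) ℍ[ℝ]} (h : Commute A B) :
    Commute (opR n A) (opR n B) := by
  unfold Commute SemiconjBy; rw [← opR_mul, ← opR_mul, h.eq]

lemma subdiag_pow_apply (k : ℕ) : ∀ i j : Fin n, (i : ℕ) < j + k →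
    (subdiagOne n ^ k) i j = 0 := by
  induction k with
  | zero =>
    intro i j h
    rw [pow_zero, Matrix.one_apply_ne]
    rintro rfl; omega
  | succ k ih =>
    intro i j h
    rw [pow_succ, Matrix.mul_apply]
    apply Finset.sum_eq_zero
    intro l _
    by_cases hl : (l : ℕ) = j + 1
    · rw [ih i l (by omega), zero_mul]
    · simp [subdiagOne, hl]

lemma subdiag_pow : subdiagOne n ^ n = 0 := by
  ext1 i j
  exact subdiag_pow_apply n i j (by have := i.2; omega)

lemma subdiagT_pow_apply (k : ℕ) : ∀ i j : Fin n, (j : ℕ) < i + k →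
    ((subdiagOne n).transpose ^ k) i j = 0 := by
  induction k with
  | zero =>
    intro i j h
    rw [pow_zero, Matrix.one_apply_ne]
    rintro rfl; omega
  | succ k ih =>
    intro i j h
    rw [pow_succ, Matrix.mul_apply]
    apply Finset.sum_eq_zero
    intro l _
    by_cases hl : (j : ℕ) = l + 1
    · rw [ih i l (by omega), zero_mul]
    · simp [subdiagOne, hl]

lemma subdiagT_pow : (subdiagOne n).transpose ^ n = 0 := by
  ext1 i j
  exact subdiagT_pow_apply n i j (by have := j.2; omega)

lemma comm_diag_sub (a : ℍ[ℝ]) : Commute (Matrix.diagonal fun _ => a) (subdiagOne n) := by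
  ext1 i j
  rw [Matrix.diagonal_mul, Matrix.mul_diagonal]
  by_cases h : (i : ℕ) = j + 1 <;> simp [subdiagOne, h]

lemma comm_diag_subT (a : ℍ[ℝ]) : Commute (Matrix.diagonal fun _ => a) (subdiagOne n).transpose := by
  ext1 i j
  rw [Matrix.diagonal_mul, Matrix.mul_diagonal]
  by_cases h : (j : ℕ) = i + 1 <;> simp [subdiagOne, h]

lemma comm_diag {a b : ℍ[ℝ]} (h : Commute a b) :
    Commute (Matrix.diagonal fun _ : Fin n => a) (Matrix.diagonal fun _ => b) := by
  unfold Commute SemiconjBy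
  simp [Matrix.diagonal_mul_diagonal, h.eq]

lemma binom {R : Type*} [Ring R] [Algebra ℝ R] {x y : R} (h : Commute x y) (k : ℕ) :
    (x - y) ^ k = ∑ i ∈ Finset.range (k + 1),
      ((-1 : ℝ) ^ i * (Nat.choose k i : ℝ)) • (x ^ (k - i) * y ^ i) := by
  rw [sub_eq_neg_add, (h.symm.neg_left).add_pow]
  refine Finset.sum_congr rfl fun i _ => ?_
  rw [neg_pow, mul_smul, (h.symm.pow_pow i (k - i)).eq.symm]
  rcases Nat.even_or_odd i with hi | hi <;>
    simp [hi.neg_one_pow, Algebra.smul_def, (Nat.cast_commute (Nat.choose k i) (_ : R)).eq]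

lemma neumann {R : Type*} [Ring R] [Algebra ℝ R] {D E N : R} (hDE : D * E = 1)
    (hDN : Commute D N) (hEN : Commute E N) (K : ℕ) :
    (D + N) * (∑ k ∈ Finset.range K, ((-1 : ℝ) ^ k) • (E ^ (k + 1) * N ^ k)) =
      1 - ((-1 : ℝ) ^ K) • (E ^ K * N ^ K) := by
  induction K with
  | zero => simp
  | succ K ih =>
    rw [Finset.sum_range_succ, mul_add, ih, mul_smul_comm, add_mul, smul_add]
    have h1 : D * (E ^ (K + 1) * N ^ K) = E ^ K * N ^ K := by
      rw [pow_succ', ← mul_assoc, ← mul_assoc, hDE, one_mul]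
    have h2 : N * (E ^ (K + 1) * N ^ K) = E ^ (K + 1) * N ^ (K + 1) := by
      rw [← mul_assoc, ← (hEN.pow_left (K + 1)).eq, mul_assoc, ← pow_succ']
    rw [h1, h2, pow_succ (-1 : ℝ) K]
    simp only [mul_neg, mul_one, neg_smul]
    abel

end SylvAux

open SylvAux

/-- If `A = 𝒥_n(α)`, `B = 𝒥_m(β)ᵀ` and
`P = |α|² − (α+ᾱ)β + β² ≠ 0` (i.e. `α` is not conjugate to `β`), then `AX − XB = C`
has the unique solution
`X = Σ_{k=0}^{n+m−2} ( Σ_{i=0}^{k+1} (−1)^{k+i} C(k+1,i) ᾱ^{k+1−i} M_k β^i ) P^{−(k+1)}`,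
where `M_k = Σ_{ℓ=0}^{k} (−1)^ℓ C(k,ℓ) F_n^{k−ℓ} C (F_mᵀ)^ℓ`. -/
theorem sylvester_jordan_regular (n m : ℕ) (α β : ℍ[ℝ]) (C : Matrix (Fin n) (Fin m) ℍ[ℝ])
    (P : ℍ[ℝ]) (hP : P = ((Quaternion.normSq α : ℝ) : ℍ[ℝ]) - (α + star α) * β + β ^ 2)
    (hPne : P ≠ 0)
    (M : ℕ → Matrix (Fin n) (Fin m) ℍ[ℝ])
    (hM : ∀ k, M k = ∑ ℓ ∈ Finset.range (k + 1),
      ((-1 : ℝ) ^ ℓ * (Nat.choose k ℓ : ℝ)) •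
        ((subdiagOne n) ^ (k - ℓ) * C * ((subdiagOne m).transpose) ^ ℓ))
    (X₀ : Matrix (Fin n) (Fin m) ℍ[ℝ])
    (hX₀ : X₀ = ∑ k ∈ Finset.range (n + m - 1),
      (∑ i ∈ Finset.range (k + 2),
        ((-1 : ℝ) ^ (k + i) * (Nat.choose (k + 1) i : ℝ)) •
          (M k).map (fun q => (star α) ^ (k + 1 - i) * q * β ^ i)).map
        (fun q => q * (P⁻¹) ^ (k + 1))) :
    jordanBlockQ n α * X₀ - X₀ * (jordanBlockQ m β).transpose = C ∧
      ∀ X : Matrix (Fin n) (Fin m) ℍ[ℝ],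
        jordanBlockQ n α * X - X * (jordanBlockQ m β).transpose = C → X = X₀ := by
  have hre : ∀ q : ℍ[ℝ], (α + star α) * q = q * (α + star α) := by
    intro q
    rw [Quaternion.self_add_star', Quaternion.coe_commutes]
  have hPβ : Commute P β := by
    rw [hP]
    refine ((Commute.sub_left ?_ ?_).add_left ((Commute.refl β).pow_left 2))
    · exact Quaternion.coe_commute _ _
    · exact (show Commute (α + star α) β from hre β).mul_left (Commute.refl β)
  have hPiβ : Commute P⁻¹ β := hPβ.inv_left₀
  have hns : α * star α = ((Quaternion.normSq α : ℝ) : ℍ[ℝ]) := Quaternion.self_mul_star α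
  have hαα : Commute α (star α) := by
    unfold Commute SemiconjBy
    rw [Quaternion.self_mul_star, Quaternion.star_mul_self]
  set a := opL m (Matrix.diagonal fun _ : Fin n => α) with ha
  set a' := opL m (Matrix.diagonal fun _ : Fin n => star α) with ha'
  set b := opR n (Matrix.diagonal fun _ : Fin m => β) with hb
  set p := opR n (Matrix.diagonal fun _ : Fin m => P⁻¹) with hp
  set f := opL m (subdiagOne n) with hf
  set g := opR n (subdiagOne m).transpose with hg
  have cab : Commute a b := comm_LR _ _
  have ca'b : Commute a' b := comm_LR _ _
  have cap : Commute a p := comm_LR _ _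
  have ca'p : Commute a' p := comm_LR _ _
  have cag : Commute a g := comm_LR _ _
  have ca'g : Commute a' g := comm_LR _ _
  have cfb : Commute f b := comm_LR _ _
  have cfp : Commute f p := comm_LR _ _
  have cfg : Commute f g := comm_LR _ _
  have caa' : Commute a a' := comm_LL (comm_diag hαα)
  have caf : Commute a f := comm_LL (comm_diag_sub _)
  have ca'f : Commute a' f := comm_LL (comm_diag_sub _)
  have cpb : Commute p b := comm_RR (comm_diag hPiβ)
  have cbg : Commute b g := comm_RR (comm_diag_subT _)
  have cpg : Commute p g := comm_RR (comm_diag_subT _)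
  have cDN : Commute (a - b) (f - g) :=
    (caf.sub_right cag).sub_left (cfb.symm.sub_right cbg)
  have cD'N : Commute (a' - b) (f - g) :=
    (ca'f.sub_right ca'g).sub_left (cfb.symm.sub_right cbg)
  have cpN : Commute p (f - g) := cfp.symm.sub_right cpg
  have cpD' : Commute p (a' - b) := ca'p.symm.sub_right cpb
  have cDp : Commute (a - b) p := cap.sub_left cpb.symm
  have cDD' : Commute (a - b) (a' - b) :=
    (caa'.sub_right cab).sub_left (ca'b.symm.sub_right (Commute.refl b))
  have cEN : Commute (p * (a' - b)) (f - g) := cpN.mul_left cD'N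
  have cDE : Commute (a - b) (p * (a' - b)) := cDp.mul_right cDD'
  have hDE : (a - b) * (p * (a' - b)) = 1 := by
    rw [← mul_assoc, cDp.eq, mul_assoc]
    ext1 X
    ext1 i j
    simp only [Module.End.mul_apply, LinearMap.sub_apply, Module.End.one_apply, ha, ha', hb, hp,
      opL_apply, opR_apply, Matrix.mul_diagonal, Matrix.diagonal_mul, Matrix.sub_apply]
    rw [mul_inv_eq_iff_eq_mul₀ hPne, hP, ← hns]
    have h1 : α * (star α * X i j) = X i j * (α * star α) := by
      rw [← mul_assoc, hns, Quaternion.coe_commutes]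
    have h2 := hre (X i j)
    have h3 : X i j * ((α + star α) * β) = α * (X i j * β) + star α * X i j * β := by
      rw [← mul_assoc, ← h2]; noncomm_ring
    rw [mul_add, mul_sub (X i j), h3, mul_sub, h1]
    noncomm_ring
  have hN : (f - g) ^ (n + m - 1) = 0 := by
    rw [sub_eq_add_neg]
    refine (cfg.neg_right).add_pow_eq_zero_of_add_le_succ_of_pow_eq_zero (m := n) (n := m) ?_ ?_ ?_
    · rw [hf, ← opL_pow, subdiag_pow]; ext1 X; simp [opL_apply]
    · rw [neg_pow, hg, ← opR_pow, subdiagT_pow]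
      ext1 X; simp [opR_apply]
    · omega
  set S : Module.End ℝ (Matrix (Fin n) (Fin m) ℍ[ℝ]) :=
    ∑ k ∈ Finset.range (n + m - 1), ((-1 : ℝ) ^ k) • ((p * (a' - b)) ^ (k + 1) * (f - g) ^ k) with hS
  have hTS : (a - b + (f - g)) * S = 1 := by
    rw [hS, neumann hDE cDN cEN, hN]; simp
  have hST : S * (a - b + (f - g)) = 1 := by
    rw [← hTS]
    symm
    refine Commute.sum_right _ _ _ fun k _ => Commute.smul_right ?_ _
    exact ((cDE.add_left cEN.symm).pow_right _).mul_right
      ((cDN.add_left (Commute.refl _)).pow_right _)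
  have hT : ∀ X, jordanBlockQ n α * X - X * (jordanBlockQ m β).transpose
      = (a - b + (f - g)) X := by
    intro X
    simp only [jordanBlockQ, Matrix.transpose_add, Matrix.diagonal_transpose, Matrix.add_mul,
      Matrix.mul_add, LinearMap.add_apply, LinearMap.sub_apply, ha, hb, hf, hg, opL_apply,
      opR_apply]
    abel
  have hMk : ∀ k, M k = ((f - g) ^ k) C := by
    intro k
    rw [hM, binom cfg, LinearMap.sum_apply]
    refine Finset.sum_congr rfl fun l _ => ?_
    rw [LinearMap.smul_apply, Module.End.mul_apply, hf, hg, ← opL_pow, ← opR_pow, opL_apply,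
      opR_apply, Matrix.mul_assoc]
  have hX : X₀ = S C := by
    rw [hX₀, hS, LinearMap.sum_apply]
    refine Finset.sum_congr rfl fun k _ => ?_
    have hmap : ∀ Y : Matrix (Fin n) (Fin m) ℍ[ℝ],
        Y.map (fun q => q * P⁻¹ ^ (k + 1)) = (p ^ (k + 1)) Y := by
      intro Y
      rw [hp, ← opR_pow, opR_apply, Matrix.diagonal_pow]
      ext1 i j
      simp [Matrix.mul_diagonal]
    rw [hmap, LinearMap.smul_apply, cpD'.mul_pow, Module.End.mul_apply, Module.End.mul_apply,
      ← hMk, ← map_smul]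
    congr 1
    rw [binom ca'b, LinearMap.sum_apply, Finset.smul_sum]
    refine Finset.sum_congr rfl fun i _ => ?_
    rw [LinearMap.smul_apply, smul_smul, pow_add, mul_assoc, Module.End.mul_apply, ha', hb,
      ← opL_pow, ← opR_pow, opL_apply, opR_apply, Matrix.diagonal_pow, Matrix.diagonal_pow]
    congr 1
    ext1 r s
    simp [Matrix.mul_diagonal, Matrix.diagonal_mul, mul_assoc]
  constructor
  · rw [hT, hX, ← Module.End.mul_apply, hTS, Module.End.one_apply]
  · intro X h
    rw [hT] at h
    rw [hX, ← h, ← Module.End.mul_apply, hST, Module.End.one_apply]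
end

section
/- Let α_1, …, α_n be quaternions in the same conjugacy class V, let A ∈ ℍ^{n×n} be the lower bidiagonal matrix with diagonal α_1, …, α_n and ones on the first subdiagonal, let A′ ∈ ℍ^{n×n} be the lower bidiagonal matrix with diagonal ᾱ_1, …, ᾱ_n and −1's on the first subdiagonal, and let Ã = [(α_i − ᾱ_{i+1})δ_{i,j+1} + δ_{i,j+2}]_{i,j=1}^{n}. Let B ∈ ℍ^{m×m} be such that 𝒳_V(B) := B² − (α_1 + ᾱ_1)B + |α_1|² I_m is invertible (which holds precisely when V ∩ σ_r(B) = ∅). Then for every C ∈ ℍ^{n×m} the equation AX − XB = C has the unique solution X = Σ_{k=0}^{n−1} Ã^k (A′C − CB) (𝒳_V(B))^{−(k+1)}. -/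
open Quaternion Matrix

theorem syl_re_conj (x h : ℍ[ℝ]) (hh : h ≠ 0) : (h⁻¹ * x * h).re = x.re := by
  have key : ∀ p q : ℍ[ℝ], (p * q).re = (q * p).re := by
    intro p q
    simp only [Quaternion.re_mul]
    ring
  rw [key, ← mul_assoc, mul_inv_cancel₀ hh, one_mul]

theorem syl_normSq_conj (x h : ℍ[ℝ]) (hh : h ≠ 0) :
    Quaternion.normSq (h⁻¹ * x * h) = Quaternion.normSq x := by
  have h0 : Quaternion.normSq h ≠ 0 := by
    rwa [Ne, Quaternion.normSq_eq_zero]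
  rw [map_mul, map_mul, map_inv₀]
  field_simp

theorem syl_iter {n m : ℕ} (T : Matrix (Fin n) (Fin n) ℍ[ℝ]) (chi W : Matrix (Fin m) (Fin m) ℍ[ℝ])
    (hW : chi * W = 1) (X D : Matrix (Fin n) (Fin m) ℍ[ℝ]) (h : X * chi = D + T * X) (N : ℕ) :
    X = ∑ k ∈ Finset.range N, T ^ k * D * W ^ (k + 1) + T ^ N * X * W ^ N := by
  have hX : X = D * W + T * X * W := by
    rw [← Matrix.add_mul, ← h, Matrix.mul_assoc, hW, Matrix.mul_one]
  induction N with
  | zero => simp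
  | succ N ih =>
    rw [Finset.sum_range_succ, add_assoc]
    have : T ^ N * X * W ^ N = T ^ N * D * W ^ (N + 1) + T ^ (N + 1) * X * W ^ (N + 1) := by
      conv_lhs => rw [hX]
      rw [pow_succ T, pow_succ' W]
      simp only [Matrix.mul_add, Matrix.add_mul, Matrix.mul_assoc]
    rw [← this]
    exact ih

theorem syl_nilp {n : ℕ} (T : Matrix (Fin n) (Fin n) ℍ[ℝ])
    (hT : ∀ i j : Fin n, (i : ℕ) < j + 1 → T i j = 0) : T ^ n = 0 := by
  have key : ∀ k : ℕ, ∀ i j : Fin n, (i : ℕ) < j + k → (T ^ k) i j = 0 := by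
    intro k
    induction k with
    | zero =>
      intro i j hij
      rw [pow_zero, Matrix.one_apply_ne]
      rintro rfl
      omega
    | succ k ih =>
      intro i j hij
      rw [pow_succ, Matrix.mul_apply]
      apply Finset.sum_eq_zero
      intro l _
      by_cases hl : (i : ℕ) < l + k
      · rw [ih i l hl, zero_mul]
      · rw [hT l j (by omega), mul_zero]
  ext1 i j
  rw [key n i j (by omega)]
  rfl

theorem syl_tele {n m : ℕ} (T : Matrix (Fin n) (Fin n) ℍ[ℝ]) (chi W : Matrix (Fin m) (Fin m) ℍ[ℝ])
    (hW : W * chi = 1) (D : Matrix (Fin n) (Fin m) ℍ[ℝ]) (N : ℕ) :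
    (∑ k ∈ Finset.range N, T ^ k * D * W ^ (k + 1)) * chi + T ^ N * D * W ^ N =
      D + T * ∑ k ∈ Finset.range N, T ^ k * D * W ^ (k + 1) := by
  induction N with
  | zero => simp
  | succ N ih =>
    rw [Finset.sum_range_succ, Matrix.add_mul, Matrix.mul_add, ← add_assoc, ← ih]
    have e1 : T ^ N * D * W ^ (N + 1) * chi = T ^ N * D * W ^ N := by
      rw [Matrix.mul_assoc, pow_succ W, Matrix.mul_assoc (W ^ N), hW, Matrix.mul_one]
    have e2 : T * (T ^ N * D * W ^ (N + 1)) = T ^ (N + 1) * D * W ^ (N + 1) := by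
      rw [pow_succ' T]
      simp only [Matrix.mul_assoc]
    rw [e1, e2]

theorem syl_core {n m : ℕ} (A A' T : Matrix (Fin n) (Fin n) ℍ[ℝ])
    (B chi W : Matrix (Fin m) (Fin m) ℍ[ℝ]) (t r : ℝ)
    (hA' : A' = t • (1 : Matrix (Fin n) (Fin n) ℍ[ℝ]) - A)
    (hT : T = r • (1 : Matrix (Fin n) (Fin n) ℍ[ℝ]) - A' * A)
    (hchi : chi = B * B - t • B + r • (1 : Matrix (Fin m) (Fin m) ℍ[ℝ]))
    (hnil : T ^ n = 0) (hW : chi * W = 1 ∧ W * chi = 1)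
    (C X₀ : Matrix (Fin n) (Fin m) ℍ[ℝ])
    (hX₀ : X₀ = ∑ k ∈ Finset.range n, T ^ k * (A' * C - C * B) * W ^ (k + 1)) :
    A * X₀ - X₀ * B = C ∧
      ∀ X : Matrix (Fin n) (Fin m) ℍ[ℝ], A * X - X * B = C → X = X₀ := by
  have expand : ∀ X : Matrix (Fin n) (Fin m) ℍ[ℝ],
      A' * (A * X - X * B) - (A * X - X * B) * B = X * chi - T * X := by
    intro X
    rw [hT, hchi, hA']
    simp only [Matrix.mul_add, Matrix.mul_sub, Matrix.sub_mul, Matrix.mul_assoc, Matrix.smul_mul,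
      Matrix.mul_smul, Matrix.one_mul, Matrix.mul_one]
    abel
  constructor
  · have h1 := syl_tele T chi W hW.2 (A' * C - C * B) n
    rw [← hX₀, hnil, Matrix.zero_mul, Matrix.zero_mul, add_zero] at h1
    have h2 := expand X₀
    rw [h1, add_sub_cancel_right] at h2
    set E := A * X₀ - X₀ * B - C with hE
    have h3 : A' * E = E * B := by
      rw [← sub_eq_zero, hE, Matrix.mul_sub, Matrix.sub_mul]
      rw [← sub_eq_zero] at h2
      rw [← h2]
      abel
    have h4 : E * chi = 0 + T * E := by
      have hAA : A' * A = t • A' - A' * A' := by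
        have : A = t • (1 : Matrix (Fin n) (Fin n) ℍ[ℝ]) - A' := by rw [hA']; abel
        conv_lhs => rw [this]
        rw [Matrix.mul_sub, Matrix.mul_smul, Matrix.mul_one]
      have h5 : E * (B * B) = A' * (A' * E) := by
        rw [← Matrix.mul_assoc, ← h3, Matrix.mul_assoc, ← h3]
      rw [hchi, hT, hAA]
      simp only [Matrix.mul_add, Matrix.mul_sub, Matrix.sub_mul, Matrix.smul_mul,
        Matrix.mul_smul, Matrix.one_mul, Matrix.mul_one]
      rw [h5, ← h3, Matrix.mul_assoc]
      abel
    have h6 := syl_iter T chi W hW.1 E 0 h4 n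
    rw [hnil] at h6
    simp only [Matrix.mul_zero, Matrix.zero_mul, Finset.sum_const_zero, add_zero] at h6
    exact sub_eq_zero.mp h6
  · intro X hX
    have h2 := expand X
    rw [hX] at h2
    have h6 := syl_iter T chi W hW.1 X (A' * C - C * B) (by rw [h2]; abel) n
    rw [hnil, Matrix.zero_mul, Matrix.zero_mul, add_zero] at h6
    rw [hX₀]
    exact h6

/-- Let `α_1,…,α_n` lie in the same conjugacy class `V`, let `A`, `A′`, `Ã`
be as in the context (lower bidiagonal matrices), and let `B ∈ ℍ^{m×m}` be such that
`𝒳_V(B) = B² − (α_1+ᾱ_1)B + |α_1|² I_m` is invertible with (two-sided) inverse `W`.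
Then `AX − XB = C` has the unique solution `X = Σ_{k=0}^{n−1} Ã^k (A′C − CB) W^{k+1}`.
(Indices here are 0-based: `a k` is `α_{k+1}`.) -/
theorem sylvester_bidiagonal_same_class (n m : ℕ) (hn : 0 < n) (a : Fin n → ℍ[ℝ])
    (hconj : ∀ i j : Fin n, ∃ h : ℍ[ℝ], h ≠ 0 ∧ a i = h⁻¹ * a j * h)
    (A A' Atil : Matrix (Fin n) (Fin n) ℍ[ℝ])
    (hA : A = Matrix.of fun i j =>
      if i = j then a i else if (i : ℕ) = (j : ℕ) + 1 then 1 else 0)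
    (hA' : A' = Matrix.of fun i j =>
      if i = j then star (a i) else if (i : ℕ) = (j : ℕ) + 1 then -1 else 0)
    (hAtil : Atil = Matrix.of fun (i j : Fin n) =>
      if (i : ℕ) = (j : ℕ) + 1 then a j - star (a i)
      else if (i : ℕ) = (j : ℕ) + 2 then 1 else 0)
    (B : Matrix (Fin m) (Fin m) ℍ[ℝ])
    (chi : Matrix (Fin m) (Fin m) ℍ[ℝ])
    (hchi : chi = B * B - Matrix.diagonal (fun _ => a ⟨0, hn⟩ + star (a ⟨0, hn⟩)) * B +
      Matrix.diagonal (fun _ => ((Quaternion.normSq (a ⟨0, hn⟩) : ℝ) : ℍ[ℝ])))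
    (W : Matrix (Fin m) (Fin m) ℍ[ℝ]) (hW : chi * W = 1 ∧ W * chi = 1)
    (C : Matrix (Fin n) (Fin m) ℍ[ℝ])
    (X₀ : Matrix (Fin n) (Fin m) ℍ[ℝ])
    (hX₀ : X₀ = ∑ k ∈ Finset.range n, Atil ^ k * (A' * C - C * B) * W ^ (k + 1)) :
    A * X₀ - X₀ * B = C ∧
      ∀ X : Matrix (Fin n) (Fin m) ℍ[ℝ], A * X - X * B = C → X = X₀ := by
  have hre : ∀ i, (a i).re = (a ⟨0, hn⟩).re := by
    intro i
    obtain ⟨h, hh, e⟩ := hconj i ⟨0, hn⟩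
    rw [e, syl_re_conj _ _ hh]
  have hns : ∀ i, Quaternion.normSq (a i) = Quaternion.normSq (a ⟨0, hn⟩) := by
    intro i
    obtain ⟨h, hh, e⟩ := hconj i ⟨0, hn⟩
    rw [e, syl_normSq_conj _ _ hh]
  have hst : ∀ i, star (a i) = ((2 * (a ⟨0, hn⟩).re : ℝ) : ℍ[ℝ]) - a i := by
    intro i
    rw [← hre i, ← Quaternion.self_add_star', add_sub_cancel_left]
  have hdiag : ∀ (s : ℝ) (p : ℕ), (Matrix.diagonal (fun _ : Fin p => (s : ℍ[ℝ]))) =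
      s • (1 : Matrix (Fin p) (Fin p) ℍ[ℝ]) := by
    intro s p
    ext1 i j
    rw [Matrix.smul_apply, Matrix.diagonal_apply, Matrix.one_apply]
    split_ifs
    · rw [← Quaternion.coe_mul_eq_smul, mul_one]
    · rw [smul_zero]
  let S : Matrix (Fin n) (Fin n) ℍ[ℝ] := Matrix.of fun i j => if (i : ℕ) = (j : ℕ) + 1 then 1 else 0
  have hS : ∀ i j, S i j = if (i : ℕ) = (j : ℕ) + 1 then 1 else 0 := fun _ _ => rfl
  have hAS : A = Matrix.diagonal a + S := by
    ext1 i j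
    rw [hA, Matrix.add_apply, Matrix.diagonal_apply, hS, Matrix.of_apply]
    by_cases hij : i = j
    · subst hij
      simp
    · simp [hij]
  have hAS' : A' = Matrix.diagonal (fun i => star (a i)) - S := by
    ext1 i j
    rw [hA', Matrix.sub_apply, Matrix.diagonal_apply, hS, Matrix.of_apply]
    by_cases hij : i = j
    · subst hij
      simp
    · by_cases h1 : (i : ℕ) = j + 1 <;> simp [hij, h1]
  have hSS : ∀ i j, (S * S) i j = if (i : ℕ) = (j : ℕ) + 2 then 1 else 0 := by
    intro i j
    rw [Matrix.mul_apply]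
    split_ifs with h
    · rw [Finset.sum_eq_single (⟨j + 1, by omega⟩ : Fin n)]
      · rw [hS, hS, if_pos (by simpa using h), if_pos rfl, mul_one]
      · intro b _ hb
        rw [hS b j, if_neg, mul_zero]
        intro hb'
        exact hb (Fin.ext hb')
      · intro hb
        exact absurd (Finset.mem_univ _) hb
    · apply Finset.sum_eq_zero
      intro b _
      rw [hS, hS]
      by_cases hb : (b : ℕ) = j + 1
      · rw [if_neg (by omega), zero_mul]
      · rw [if_neg hb, mul_zero]
  refine syl_core A A' Atil B chi W (2 * (a ⟨0, hn⟩).re) (Quaternion.normSq (a ⟨0, hn⟩))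
    ?_ ?_ ?_ ?_ hW C X₀ hX₀
  · rw [hAS, hAS', ← hdiag, ← sub_sub, Matrix.diagonal_sub]
    simp only [hst]
  · have hDD : Matrix.diagonal (fun i => star (a i)) * Matrix.diagonal a =
        Quaternion.normSq (a ⟨0, hn⟩) • (1 : Matrix (Fin n) (Fin n) ℍ[ℝ]) := by
      rw [Matrix.diagonal_mul_diagonal, ← hdiag]
      congr 1
      funext i
      rw [Quaternion.star_mul_self, hns]
    rw [hAS, hAS', Matrix.sub_mul, Matrix.mul_add, Matrix.mul_add, hDD]
    ext1 i j
    have e : ∀ P Q R U : Matrix (Fin n) (Fin n) ℍ[ℝ], P - (P + Q - (R + U)) = R - Q + U := by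
      intro P Q R U
      abel
    rw [e, Matrix.add_apply, Matrix.sub_apply, hSS, Matrix.diagonal_mul, Matrix.mul_diagonal, hS,
      hAtil, Matrix.of_apply]
    by_cases h1 : (i : ℕ) = j + 1
    · rw [if_pos h1, if_pos h1, if_neg (by omega), one_mul, mul_one, add_zero]
    · rw [if_neg h1, if_neg h1, zero_mul, mul_zero, sub_zero, zero_add]
  · rw [hchi, Quaternion.self_add_star', hdiag, hdiag, Matrix.smul_mul, Matrix.one_mul]
  · apply syl_nilp
    intro i j hij
    rw [hAtil, Matrix.of_apply, if_neg (by omega), if_neg (by omega)]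
end

section
/- Let 𝛂 = (α_1, …, α_n) be a tuple of quaternions, let A = 𝒥_𝛂 ∈ ℍ^{n×n} be the lower bidiagonal matrix with diagonal α_1, …, α_n and ones on the first subdiagonal, and let B ∈ ℍ^{m×m} be such that 𝒳_{[α_k]}(B) := B² − (α_k + ᾱ_k)B + |α_k|² I_m is invertible for k = 1, …, n. Let C ∈ ℍ^{n×m} have rows C̃_1, …, C̃_n. Then the equation AX − XB = C has a unique solution X ∈ ℍ^{n×m}, whose k‑th row is X̃_k = − Σ_{j=1}^{k} (ρ_{ᾱ_k} ρ_{ᾱ_{k−1}} ⋯ ρ_{ᾱ_j} C̃_j)^{e_r}(B) · (𝒳_{[α_j]}(B))⁻¹ (𝒳_{[α_{j+1}]}(B))⁻¹ ⋯ (𝒳_{[α_k]}(B))⁻¹, where the product of inverses is taken left to right in increasing order of the index i from j to k. -/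
open Quaternion Matrix Polynomial

/-- The polynomial `ρ_{g k} ρ_{g (k−1)} ⋯ ρ_{g j}` (leftmost factor has index `k`),
where `ρ_a(z) = z − a`. -/
noncomputable def rhoProd (g : ℕ → ℍ[ℝ]) (j k : ℕ) : Polynomial ℍ[ℝ] :=
  (((List.range (k + 1 - j)).map fun t => Polynomial.X - Polynomial.C (g (k - t))).prod)

/-- Right evaluation of the row-vector polynomial `P·D` at `B`:
`(P·D)^{e_r}(B) = Σ_t (P.coeff t) D B^t`. -/
noncomputable def rEvalRow {m : ℕ} (P : Polynomial ℍ[ℝ]) (D : Matrix (Fin 1) (Fin m) ℍ[ℝ])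
    (B : Matrix (Fin m) (Fin m) ℍ[ℝ]) : Matrix (Fin 1) (Fin m) ℍ[ℝ] :=
  ∑ t ∈ Finset.range (P.natDegree + 1), P.coeff t • (D * B ^ t)

namespace SylB

variable {m : ℕ}

/-- The operator `y ↦ yB − g y`. -/
noncomputable def T (B : Matrix (Fin m) (Fin m) ℍ[ℝ]) (g : ℍ[ℝ])
    (y : Matrix (Fin 1) (Fin m) ℍ[ℝ]) : Matrix (Fin 1) (Fin m) ℍ[ℝ] := y * B - g • y

theorem rEval_eq (P : Polynomial ℍ[ℝ]) (D : Matrix (Fin 1) (Fin m) ℍ[ℝ])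
    (B : Matrix (Fin m) (Fin m) ℍ[ℝ]) (N : ℕ) (hN : P.natDegree < N) :
    rEvalRow P D B = ∑ t ∈ Finset.range N, P.coeff t • (D * B ^ t) := by
  unfold rEvalRow
  apply Finset.sum_subset
  · intro x hx
    simp only [Finset.mem_range] at *
    omega
  · intro x _ hx
    simp only [Finset.mem_range] at hx
    rw [Polynomial.coeff_eq_zero_of_natDegree_lt (by omega), zero_smul]

theorem rEval_one (D : Matrix (Fin 1) (Fin m) ℍ[ℝ])
    (B : Matrix (Fin m) (Fin m) ℍ[ℝ]) : rEvalRow 1 D B = D := by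
  simp [rEvalRow]

theorem rEval_mul (g : ℍ[ℝ]) (P : Polynomial ℍ[ℝ]) (D : Matrix (Fin 1) (Fin m) ℍ[ℝ])
    (B : Matrix (Fin m) (Fin m) ℍ[ℝ]) :
    rEvalRow ((Polynomial.X - Polynomial.C g) * P) D B = T B g (rEvalRow P D B) := by
  have hd : ((Polynomial.X - Polynomial.C g) * P).natDegree < P.natDegree + 2 := by
    have h1 := Polynomial.natDegree_mul_le (p := Polynomial.X - Polynomial.C g) (q := P)
    have h2 := Polynomial.natDegree_X_sub_C_le g
    omega
  rw [rEval_eq _ D B _ hd]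
  have e1 := rEval_eq P D B (P.natDegree + 1) (by omega)
  have e2 := rEval_eq P D B (P.natDegree + 2) (by omega)
  have : T B g (rEvalRow P D B) = (∑ t ∈ Finset.range (P.natDegree + 1), P.coeff t • (D * B ^ (t+1)))
      - ∑ t ∈ Finset.range (P.natDegree + 2), (g * P.coeff t) • (D * B ^ t) := by
    unfold T
    congr 1
    · rw [e1, Matrix.sum_mul]
      refine Finset.sum_congr rfl fun t _ => ?_
      rw [Matrix.smul_mul, Matrix.mul_assoc, pow_succ]
    · rw [e2, Finset.smul_sum]
      refine Finset.sum_congr rfl fun t _ => ?_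
      rw [smul_smul]
  rw [this]
  have : ∀ t, ((Polynomial.X - Polynomial.C g) * P).coeff t • (D * B ^ t)
      = (Polynomial.X * P).coeff t • (D * B ^ t) - (g * P.coeff t) • (D * B ^ t) := by
    intro t
    rw [sub_mul, Polynomial.coeff_sub, Polynomial.coeff_C_mul, sub_smul]
  simp only [this, Finset.sum_sub_distrib]
  congr 1
  rw [Finset.sum_range_succ']
  simp [Polynomial.coeff_X_mul]

theorem rho_succ (g : ℕ → ℍ[ℝ]) (j k : ℕ) (h : j ≤ k + 1) :
    rhoProd g j (k+1) = (Polynomial.X - Polynomial.C (g (k+1))) * rhoProd g j k := by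
  unfold rhoProd
  have : k + 1 + 1 - j = (k + 1 - j) + 1 := by omega
  rw [this, List.range_succ_eq_map, List.map_cons, List.prod_cons, List.map_map]
  simp only [Nat.sub_zero]
  congr 3
  funext t
  simp [Nat.succ_eq_add_one]

theorem rho_gt (g : ℕ → ℍ[ℝ]) (j k : ℕ) (h : k < j) : rhoProd g j k = 1 := by
  unfold rhoProd
  have : k + 1 - j = 0 := by omega
  simp [this]

theorem rho_zero (g : ℕ → ℍ[ℝ]) :
    rhoProd g 0 0 = (Polynomial.X - Polynomial.C (g 0)) * 1 := by
  simp [rhoProd]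

/-- product of inverses. -/
noncomputable def Wp (W : ℕ → Matrix (Fin m) (Fin m) ℍ[ℝ]) (j k : ℕ) :
    Matrix (Fin m) (Fin m) ℍ[ℝ] := ((List.range (k + 1 - j)).map fun t => W (j + t)).prod

theorem Wp_succ (W : ℕ → Matrix (Fin m) (Fin m) ℍ[ℝ]) (j k : ℕ) (h : j ≤ k + 1) :
    Wp W j (k+1) = Wp W j k * W (k+1) := by
  unfold Wp
  have : k + 1 + 1 - j = (k + 1 - j) + 1 := by omega
  rw [this, List.range_succ, List.map_append, List.prod_append]
  simp only [List.map_cons, List.map_nil, List.prod_singleton]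
  congr 2
  omega

theorem Wp_gt (W : ℕ → Matrix (Fin m) (Fin m) ℍ[ℝ]) (j k : ℕ) (h : k < j) : Wp W j k = 1 := by
  unfold Wp
  have : k + 1 - j = 0 := by omega
  simp [this]

theorem Wp_comm (W : ℕ → Matrix (Fin m) (Fin m) ℍ[ℝ]) (B : Matrix (Fin m) (Fin m) ℍ[ℝ])
    (j k : ℕ) (h : ∀ i ≤ k, Commute (W i) B) : Commute (Wp W j k) B := by
  unfold Wp
  apply Commute.list_prod_left
  intro x hx
  simp only [List.mem_map, List.mem_range] at hx
  obtain ⟨t, ht, rfl⟩ := hx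
  exact h _ (by omega)

theorem T_mul (B M : Matrix (Fin m) (Fin m) ℍ[ℝ]) (g : ℍ[ℝ]) (y : Matrix (Fin 1) (Fin m) ℍ[ℝ])
    (h : Commute M B) : T B g (y * M) = T B g y * M := by
  unfold T
  rw [Matrix.sub_mul, Matrix.smul_mul, Matrix.mul_assoc, Matrix.mul_assoc, h.eq]

theorem T_sub (B : Matrix (Fin m) (Fin m) ℍ[ℝ]) (g : ℍ[ℝ]) (y z : Matrix (Fin 1) (Fin m) ℍ[ℝ]) :
    T B g (y - z) = T B g y - T B g z := by
  unfold T
  rw [Matrix.sub_mul, smul_sub]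
  abel

theorem T_neg (B : Matrix (Fin m) (Fin m) ℍ[ℝ]) (g : ℍ[ℝ]) (y : Matrix (Fin 1) (Fin m) ℍ[ℝ]) :
    T B g (-y) = -T B g y := by
  unfold T
  rw [Matrix.neg_mul, smul_neg]
  abel

theorem T_sum (B : Matrix (Fin m) (Fin m) ℍ[ℝ]) (g : ℍ[ℝ]) (s : Finset ℕ)
    (y : ℕ → Matrix (Fin 1) (Fin m) ℍ[ℝ]) :
    T B g (∑ i ∈ s, y i) = ∑ i ∈ s, T B g (y i) := by
  unfold T
  rw [Matrix.sum_mul, Finset.smul_sum, Finset.sum_sub_distrib]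

/-- explicit formula. -/
noncomputable def F (a : ℕ → ℍ[ℝ]) (B : Matrix (Fin m) (Fin m) ℍ[ℝ])
    (W : ℕ → Matrix (Fin m) (Fin m) ℍ[ℝ]) (c : ℕ → Matrix (Fin 1) (Fin m) ℍ[ℝ]) (k : ℕ) :
    Matrix (Fin 1) (Fin m) ℍ[ℝ] :=
  -∑ j ∈ Finset.range (k+1), rEvalRow (rhoProd (fun t => star (a t)) j k) (c j) B * Wp W j k

theorem F_zero (a : ℕ → ℍ[ℝ]) (B : Matrix (Fin m) (Fin m) ℍ[ℝ])
    (W : ℕ → Matrix (Fin m) (Fin m) ℍ[ℝ]) (c : ℕ → Matrix (Fin 1) (Fin m) ℍ[ℝ]) :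
    F a B W c 0 = -(T B (star (a 0)) (c 0) * W 0) := by
  unfold F
  simp [rho_zero, -mul_one, rEval_mul, rEval_one, Wp]

theorem F_succ (a : ℕ → ℍ[ℝ]) (B : Matrix (Fin m) (Fin m) ℍ[ℝ])
    (W : ℕ → Matrix (Fin m) (Fin m) ℍ[ℝ]) (c : ℕ → Matrix (Fin 1) (Fin m) ℍ[ℝ]) (k : ℕ)
    (h : ∀ i ≤ k, Commute (W i) B) :
    F a B W c (k+1) = -(T B (star (a (k+1))) (c (k+1) - F a B W c k) * W (k+1)) := by
  have hs : F a B W c (k+1) = -∑ j ∈ Finset.range (k+1+1),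
      T B (star (a (k+1)))
        (rEvalRow (rhoProd (fun t => star (a t)) j k) (c j) B * Wp W j k) * W (k+1) := by
    unfold F
    congr 1
    refine Finset.sum_congr rfl fun j hj => ?_
    have hj' : j ≤ k + 1 := by
      simp only [Finset.mem_range] at hj
      omega
    rw [rho_succ _ _ _ hj', rEval_mul, Wp_succ _ _ _ hj', T_mul _ _ _ _ (Wp_comm W B j k h),
      Matrix.mul_assoc]
  rw [hs, Finset.sum_range_succ, ← Matrix.sum_mul, ← T_sum, rho_gt _ _ _ (Nat.lt_succ_self k),
    Wp_gt _ _ _ (Nat.lt_succ_self k), rEval_one, Matrix.mul_one, ← Matrix.add_mul]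
  congr 2
  unfold F
  rw [sub_neg_eq_add]
  unfold T
  rw [Matrix.add_mul, smul_add]
  abel

theorem diag_smul (r : ℝ) (M : Matrix (Fin m) (Fin m) ℍ[ℝ]) :
    Matrix.diagonal (fun _ => (r : ℍ[ℝ])) * M = r • M := by
  refine Matrix.ext fun i j => ?_
  rw [Matrix.diagonal_mul, Matrix.smul_apply, Quaternion.coe_mul_eq_smul]

theorem diag_one (r : ℝ) :
    Matrix.diagonal (fun _ : Fin m => (r : ℍ[ℝ])) = r • 1 := by
  rw [← diag_smul, Matrix.mul_one]

theorem chi_eq (q : ℍ[ℝ]) (B X : Matrix (Fin m) (Fin m) ℍ[ℝ])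
    (h : X = B * B - Matrix.diagonal (fun _ => q + star q) * B +
      Matrix.diagonal (fun _ => ((Quaternion.normSq q : ℝ) : ℍ[ℝ]))) :
    X = B * B - (2 * q.re) • B + (Quaternion.normSq q) • 1 := by
  have : q + star q = ((2 * q.re : ℝ) : ℍ[ℝ]) := Quaternion.self_add_star' q
  rw [h, this, diag_smul, diag_one]

theorem chi_comm (q : ℍ[ℝ]) (B X : Matrix (Fin m) (Fin m) ℍ[ℝ])
    (h : X = B * B - (2 * q.re) • B + (Quaternion.normSq q) • 1) : Commute X B := by
  rw [h]
  have h1 : Commute B B := Commute.refl B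
  exact ((h1.mul_left h1).sub_left (h1.smul_left _)).add_left ((Commute.one_left B).smul_left _)

theorem W_comm (X W B : Matrix (Fin m) (Fin m) ℍ[ℝ]) (h1 : X * W = 1) (h2 : W * X = 1)
    (h : Commute X B) : Commute W B := by
  have : W * B = W * B * (X * W) := by rw [h1, mul_one]
  unfold Commute SemiconjBy
  rw [this, mul_assoc, ← mul_assoc B, ← h.eq, mul_assoc X, ← mul_assoc W X, h2, one_mul]

theorem smul_coe (r : ℝ) (x : Matrix (Fin 1) (Fin m) ℍ[ℝ]) : (r : ℍ[ℝ]) • x = r • x := by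
  refine Matrix.ext fun i j => ?_
  rw [Matrix.smul_apply, Matrix.smul_apply, smul_eq_mul, Quaternion.coe_mul_eq_smul]

theorem TT (q p : ℍ[ℝ]) (B X : Matrix (Fin m) (Fin m) ℍ[ℝ])
    (h : X = B * B - (2 * q.re) • B + (Quaternion.normSq q) • 1)
    (hs : p + q = ((2 * q.re : ℝ) : ℍ[ℝ])) (hn : p * q = ((Quaternion.normSq q : ℝ) : ℍ[ℝ]))
    (x : Matrix (Fin 1) (Fin m) ℍ[ℝ]) :
    T B p (T B q x) = x * X := by
  rw [h, Matrix.mul_add, Matrix.mul_sub, Matrix.mul_smul, Matrix.mul_smul, Matrix.mul_one,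
    ← smul_coe, ← smul_coe, ← hs, ← hn]
  unfold T
  rw [Matrix.sub_mul, smul_sub, smul_smul, Matrix.smul_mul, add_smul, Matrix.mul_assoc]
  abel

/-- The scalar row equation. -/
theorem row_iff (q : ℍ[ℝ]) (B X W : Matrix (Fin m) (Fin m) ℍ[ℝ])
    (h : X = B * B - (2 * q.re) • B + (Quaternion.normSq q) • 1)
    (h1 : X * W = 1) (h2 : W * X = 1) (x d : Matrix (Fin 1) (Fin m) ℍ[ℝ]) :
    T B q x = -d ↔ x = -(T B (star q) d * W) := by
  have hs : star q + q = ((2 * q.re : ℝ) : ℍ[ℝ]) := Quaternion.star_add_self' q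
  have hs' : q + star q = ((2 * q.re : ℝ) : ℍ[ℝ]) := Quaternion.self_add_star' q
  constructor
  · intro hx
    have := TT q (star q) B X h hs (Quaternion.star_mul_self q) x
    rw [hx, T_neg] at this
    rw [← Matrix.neg_mul, this, Matrix.mul_assoc, h1, Matrix.mul_one]
  · rintro rfl
    have hc : Commute W B := W_comm X W B h1 h2 (chi_comm q B X h)
    have e : T B q (T B (star q) d) = d * X := by
      refine TT (star q) q B X ?_ ?_ ?_ d
      · rw [h, Quaternion.normSq_star, Quaternion.re_star]
      · rw [hs', Quaternion.re_star]
      · rw [Quaternion.normSq_star, Quaternion.self_mul_star]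
    rw [T_neg, T_mul _ _ _ _ hc, e, Matrix.mul_assoc, h1, Matrix.mul_one]

/-- Row of a matrix as a `1 × m` matrix. -/
def row {n : ℕ} (X : Matrix (Fin n) (Fin m) ℍ[ℝ]) (k : Fin n) : Matrix (Fin 1) (Fin m) ℍ[ℝ] :=
  Matrix.of fun (_ : Fin 1) jc => X k jc

theorem row_A_mul {n : ℕ} (a : ℕ → ℍ[ℝ]) (X : Matrix (Fin n) (Fin m) ℍ[ℝ]) (k : Fin n) (l : Fin m) :
    ((Matrix.of fun (i j : Fin n) =>
      if (i : ℕ) = (j : ℕ) then a (i : ℕ) else if (i : ℕ) = (j : ℕ) + 1 then 1 else 0) * X) k l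
    = a k * X k l + (if h : 0 < (k : ℕ) then X ⟨k - 1, by omega⟩ l else 0) := by
  rw [Matrix.mul_apply]
  have : ∀ j : Fin n, (Matrix.of (fun (i j : Fin n) =>
      if (i : ℕ) = (j : ℕ) then a (i : ℕ) else if (i : ℕ) = (j : ℕ) + 1 then 1 else 0) k j) * X j l
      = (if k = j then a k * X j l else 0) + (if (k : ℕ) = (j : ℕ) + 1 then X j l else 0) := by
    intro j
    rw [Matrix.of_apply]
    by_cases h1 : k = j
    · subst h1; simp
    · have h1' : (k : ℕ) ≠ j := fun h => h1 (Fin.ext h)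
      by_cases h2 : (k : ℕ) = (j : ℕ) + 1
      · simp [h1, h1', h2]
      · simp [h1, h1', h2]
  simp only [this, Finset.sum_add_distrib]
  congr 1
  · simp
  · split_ifs with h
    · rw [Finset.sum_eq_single ⟨k - 1, by omega⟩]
      · rw [if_pos]
        simp only
        omega
      · intro b _ hb
        rw [if_neg]
        intro h'
        apply hb
        apply Fin.ext
        simp only
        omega
      · simp
    · apply Finset.sum_eq_zero
      intro j _
      rw [if_neg]
      omega

/-- The previous row (zero for the first one). -/
noncomputable def prev (x : ℕ → Matrix (Fin 1) (Fin m) ℍ[ℝ]) (k : ℕ) : Matrix (Fin 1) (Fin m) ℍ[ℝ] :=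
  if 0 < k then x (k - 1) else 0

/-- Extension of rows to all indices. -/
noncomputable def extRow {n : ℕ} (X : Matrix (Fin n) (Fin m) ℍ[ℝ]) (k : ℕ) : Matrix (Fin 1) (Fin m) ℍ[ℝ] :=
  if h : k < n then row X ⟨k, h⟩ else 0

theorem eq_iff {n : ℕ} (a : ℕ → ℍ[ℝ]) (B : Matrix (Fin m) (Fin m) ℍ[ℝ])
    (X C : Matrix (Fin n) (Fin m) ℍ[ℝ]) :
    ((Matrix.of fun (i j : Fin n) =>
      if (i : ℕ) = (j : ℕ) then a (i : ℕ) else if (i : ℕ) = (j : ℕ) + 1 then 1 else 0) * X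
        - X * B = C) ↔
    ∀ k < n, T B (a k) (extRow X k) = -(extRow C k - prev (extRow X) k) := by
  have key : ∀ (k : Fin n) (l : Fin m), (T B (a k) (extRow X k) 0 l = (-(extRow C k - prev (extRow X) k)) 0 l)
      ↔ ((Matrix.of fun (i j : Fin n) =>
      if (i : ℕ) = (j : ℕ) then a (i : ℕ) else if (i : ℕ) = (j : ℕ) + 1 then 1 else 0) * X
        - X * B) k l = C k l := by
    intro k l
    have hB : (row X k * B) 0 l = (X * B) k l := by
      simp [Matrix.mul_apply, row]
    have hp : prev (extRow X) k 0 l = (if h : 0 < (k : ℕ) then X ⟨k - 1, by omega⟩ l else 0) := by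
      unfold prev
      split_ifs with h
      · have : (k : ℕ) - 1 < n := by omega
        simp [extRow, this, row]
      · rfl
    have hX : extRow X k = row X k := by simp [extRow]
    have hC : extRow C k 0 l = C k l := by simp [extRow, row]
    have hr : row X k 0 l = X k l := rfl
    rw [Matrix.sub_apply, row_A_mul, ← hp]
    unfold T
    rw [hX, Matrix.sub_apply, hB, Matrix.smul_apply, Matrix.neg_apply, Matrix.sub_apply, hC, hr,
      smul_eq_mul]
    constructor
    · intro h
      rw [sub_eq_iff_eq_add] at h
      rw [h]
      abel
    · intro h
      rw [← h]
      abel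
  constructor
  · intro h k hk
    refine Matrix.ext fun i l => ?_
    have := (key ⟨k, hk⟩ l).2 (by rw [h])
    rw [Subsingleton.elim i 0]
    exact this
  · intro h
    refine Matrix.ext fun k l => ?_
    exact (key k l).1 (by rw [h k k.2])

end SylB

/-- Let `A = 𝒥_𝛂` be lower bidiagonal with diagonal `α_1,…,α_n` and ones
on the first subdiagonal, and let `B` be such that each `𝒳_{[α_k]}(B)` is invertible, with
two-sided inverse `W k`.  Then `AX − XB = C` has a unique solution, whose `k`-th row is
`X̃_k = − Σ_{j=1}^{k} (ρ_{ᾱ_k}⋯ρ_{ᾱ_j} C̃_j)^{e_r}(B) · (𝒳_{[α_j]}(B))⁻¹ ⋯ (𝒳_{[α_k]}(B))⁻¹`.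
(Indices here are 0-based: `a k` is `α_{k+1}`.) -/
theorem sylvester_bidiagonal_rows (n m : ℕ) (a : ℕ → ℍ[ℝ])
    (A : Matrix (Fin n) (Fin n) ℍ[ℝ])
    (hA : A = Matrix.of fun (i j : Fin n) =>
      if (i : ℕ) = (j : ℕ) then a (i : ℕ) else if (i : ℕ) = (j : ℕ) + 1 then 1 else 0)
    (B : Matrix (Fin m) (Fin m) ℍ[ℝ])
    (chi : ℕ → Matrix (Fin m) (Fin m) ℍ[ℝ])
    (hchi : ∀ k, chi k = B * B - Matrix.diagonal (fun _ => a k + star (a k)) * B +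
      Matrix.diagonal (fun _ => ((Quaternion.normSq (a k) : ℝ) : ℍ[ℝ])))
    (W : ℕ → Matrix (Fin m) (Fin m) ℍ[ℝ])
    (hW : ∀ k < n, chi k * W k = 1 ∧ W k * chi k = 1)
    (C : Matrix (Fin n) (Fin m) ℍ[ℝ]) :
    (∃! X : Matrix (Fin n) (Fin m) ℍ[ℝ], A * X - X * B = C) ∧
      ∀ X : Matrix (Fin n) (Fin m) ℍ[ℝ], A * X - X * B = C →
        ∀ k : Fin n, (Matrix.of fun (_ : Fin 1) jc => X k jc) =
          -(∑ j : Fin n, if (j : ℕ) ≤ (k : ℕ) then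
              rEvalRow (rhoProd (fun t => star (a t)) j k)
                  (Matrix.of fun (_ : Fin 1) jc => C j jc) B *
                ((List.range ((k : ℕ) + 1 - (j : ℕ))).map fun t => W ((j : ℕ) + t)).prod
            else 0) := by
  subst hA
  have hc : ∀ k, chi k = B * B - (2 * (a k).re) • B + (Quaternion.normSq (a k)) • 1 :=
    fun k => SylB.chi_eq _ _ _ (hchi k)
  have hWc : ∀ k < n, Commute (W k) B := fun k hk =>
    SylB.W_comm _ _ _ (hW k hk).1 (hW k hk).2 (SylB.chi_comm _ _ _ (hc k))
  have hF : ∀ k < n, SylB.F a B W (SylB.extRow C) k =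
      -(SylB.T B (star (a k)) (SylB.extRow C k - SylB.prev (SylB.F a B W (SylB.extRow C)) k) * W k) := by
    intro k hk
    cases k with
    | zero => simp [SylB.F_zero, SylB.prev]
    | succ k =>
      rw [SylB.F_succ _ _ _ _ _ (fun i hi => hWc i (by omega))]
      simp [SylB.prev]
  have hsol : ∀ X : Matrix (Fin n) (Fin m) ℍ[ℝ], ((Matrix.of fun (i j : Fin n) =>
      if (i : ℕ) = (j : ℕ) then a (i : ℕ) else if (i : ℕ) = (j : ℕ) + 1 then 1 else 0) * X
        - X * B = C) ↔ ∀ k < n, SylB.extRow X k = SylB.F a B W (SylB.extRow C) k := by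
    intro X
    rw [SylB.eq_iff]
    have e : ∀ k < n, (SylB.T B (a k) (SylB.extRow X k) = -(SylB.extRow C k - SylB.prev (SylB.extRow X) k))
        ↔ _ := fun k hk => SylB.row_iff (a k) B (chi k) (W k) (hc k) (hW k hk).1 (hW k hk).2 _ _
    constructor
    · intro h k
      induction k with
      | zero =>
        intro hk
        rw [(e 0 hk).1 (h 0 hk), hF 0 hk]
        simp [SylB.prev]
      | succ k ih =>
        intro hk
        rw [(e _ hk).1 (h _ hk), hF _ hk]
        simp [SylB.prev, ih (by omega)]
    · intro h k hk
      rw [e k hk, h k hk, hF k hk]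
      congr 4
      unfold SylB.prev
      split_ifs
      · rw [h _ (by omega)]
      · rfl
  have hrow : ∀ (X : Matrix (Fin n) (Fin m) ℍ[ℝ]) (k : Fin n), SylB.extRow X k =
      Matrix.of fun (_ : Fin 1) jc => X k jc := by
    intro X k
    simp [SylB.extRow, SylB.row]
  refine ⟨⟨Matrix.of fun k l => SylB.F a B W (SylB.extRow C) k 0 l, ?_, ?_⟩, ?_⟩
  · refine (hsol _).2 fun k hk => ?_
    rw [hrow _ ⟨k, hk⟩]
    refine Matrix.ext fun i l => ?_
    rw [Subsingleton.elim i 0]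
    rfl
  · intro Y hY
    have h := (hsol Y).1 hY
    refine Matrix.ext fun k l => ?_
    have := h k k.2
    rw [hrow] at this
    exact congrFun (congrFun this 0) l
  · intro X hX k
    rw [← hrow, (hsol X).1 hX k k.2]
    unfold SylB.F
    congr 1
    simp only [← hrow]
    rw [Fin.sum_univ_eq_sum_range (fun j => if j ≤ (k : ℕ) then
      rEvalRow (rhoProd (fun t => star (a t)) j k) (SylB.extRow C j) B *
        ((List.range ((k : ℕ) + 1 - j)).map fun t => W (j + t)).prod else 0) n,
      ← Finset.sum_filter]
    refine Finset.sum_congr ?_ fun j _ => rfl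
    ext j
    have := k.2
    simp only [Finset.mem_range, Finset.mem_filter]
    omega
end

section
/- Let α ∈ ℍ, let D, M ∈ ℍ^{1×m} be row vectors, and let B ∈ ℍ^{m×m} be such that 𝒳_{[α]}(B) := B² − (α + ᾱ)B + |α|² I_m is invertible. If (ρ_α D)^{e_r}(B) = M, i.e. DB − αD = M, then D = (ρ_{ᾱ} M)^{e_r}(B) · (𝒳_{[α]}(B))⁻¹ = (MB − ᾱM)(𝒳_{[α]}(B))⁻¹. -/
open Quaternion Matrix

/-- Let `α ∈ ℍ`, `D, M ∈ ℍ^{1×m}`, and let `B` be such that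
`𝒳_{[α]}(B) = B² − (α+ᾱ)B + |α|² I_m` is invertible, with two-sided inverse `W`.
If `(ρ_α D)^{e_r}(B) = DB − αD = M`, then
`D = (ρ_{ᾱ} M)^{e_r}(B) · (𝒳_{[α]}(B))⁻¹ = (MB − ᾱM) W`. -/
theorem rho_eval_solve (m : ℕ) (α : ℍ[ℝ]) (D M : Matrix (Fin 1) (Fin m) ℍ[ℝ])
    (B : Matrix (Fin m) (Fin m) ℍ[ℝ])
    (chi : Matrix (Fin m) (Fin m) ℍ[ℝ])
    (hchi : chi = B * B - Matrix.diagonal (fun _ => α + star α) * B +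
      Matrix.diagonal (fun _ => ((Quaternion.normSq α : ℝ) : ℍ[ℝ])))
    (W : Matrix (Fin m) (Fin m) ℍ[ℝ]) (hW : chi * W = 1 ∧ W * chi = 1)
    (hDM : D * B - α • D = M) :
    D = (M * B - star α • M) * W := by
  have hreal : ∀ r : ℝ, D * Matrix.diagonal (fun _ : Fin m => (r : ℍ[ℝ])) = (r : ℍ[ℝ]) • D := by
    intro r
    ext1 i j
    rw [Matrix.mul_diagonal, Matrix.smul_apply, smul_eq_mul]
    exact (Quaternion.coe_commutes r (D i j)).symm
  have hsum : α + star α = ((2 * α.re : ℝ) : ℍ[ℝ]) := Quaternion.self_add_star' α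
  have hn : star α * α = ((Quaternion.normSq α : ℝ) : ℍ[ℝ]) := Quaternion.star_mul_self α
  have key : M * B - star α • M = D * chi := by
    rw [hchi, ← hDM, Matrix.mul_add, Matrix.mul_sub, hreal, ← Matrix.mul_assoc D B B, ← Matrix.mul_assoc D _ B, hsum, hreal,
      ← hsum, ← hn, mul_smul, Matrix.sub_mul, smul_sub, Matrix.smul_mul, Matrix.smul_mul, add_smul]
    abel
  rw [key, Matrix.mul_assoc, hW.1, Matrix.mul_one]
end

section
/- Let A = [α_{i,j}]_{i,j=1}^{n} ∈ ℍ^{n×n} be lower triangular (α_{i,j} = 0 for i < j) and let B ∈ ℍ^{m×m} be such that 𝒳_{[α_{k,k}]}(B) := B² − (α_{k,k} + ᾱ_{k,k})B + |α_{k,k}|² I_m is invertible for k = 1, …, n. Then for every C ∈ ℍ^{n×m} with rows C̃_1, …, C̃_n, the equation AX − XB = C has a unique solution X whose rows X̃_k are defined recursively by X̃_1 = −(ρ_{ᾱ_{1,1}} C̃_1)^{e_r}(B) · (𝒳_{[α_{1,1}]}(B))⁻¹ and, for k = 2, …, n, X̃_k = −(ρ_{ᾱ_{k,k}} C̃_k)^{e_r}(B)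 · (𝒳_{[α_{k,k}]}(B))⁻¹ + Σ_{j=1}^{k−1} (ρ_{ᾱ_{k,k}} α_{k,j} X̃_j)^{e_r}(B) · (𝒳_{[α_{k,k}]}(B))⁻¹. -/
open Quaternion Matrix

theorem syl_row {m : ℕ} (B chi W : Matrix (Fin m) (Fin m) ℍ[ℝ]) (a : ℍ[ℝ])
    (hchi : chi = B * B - Matrix.diagonal (fun _ => a + star a) * B +
      Matrix.diagonal (fun _ => ((Quaternion.normSq a : ℝ) : ℍ[ℝ])))
    (hW : chi * W = 1) (x D : Matrix (Fin 1) (Fin m) ℍ[ℝ]) (h : a • x - x * B = D) :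
    x = -((D * B - star a • D) * W) := by
  have hd : ∀ r : ℝ, x * Matrix.diagonal (fun _ : Fin m => (r : ℍ[ℝ])) = (r : ℍ[ℝ]) • x := by
    intro r
    ext1 i j
    simp only [Matrix.mul_diagonal, Matrix.smul_apply, smul_eq_mul]
    exact (Quaternion.coe_commutes r (x i j)).symm
  have ht : a + star a = ((2 * a.re : ℝ) : ℍ[ℝ]) := by
    rw [Quaternion.self_add_star]; push_cast; rfl
  have hx : x * chi = x * B * B - (a + star a) • (x * B) + (star a * a) • x := by
    rw [hchi, Matrix.mul_add, Matrix.mul_sub, hd, ht, ← Matrix.mul_assoc, ← Matrix.mul_assoc, hd,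
      Matrix.smul_mul, Quaternion.star_mul_self]
  have : D * B - star a • D = -(x * chi) := by
    rw [hx, ← h, Matrix.sub_mul, smul_sub, Matrix.smul_mul, smul_smul, add_smul]
    abel
  rw [this, Matrix.neg_mul, neg_neg, Matrix.mul_assoc, hW, Matrix.mul_one]

theorem syl_formula (n m : ℕ)
    (A : Matrix (Fin n) (Fin n) ℍ[ℝ]) (hA : ∀ i j : Fin n, i < j → A i j = 0)
    (B : Matrix (Fin m) (Fin m) ℍ[ℝ])
    (chi : Fin n → Matrix (Fin m) (Fin m) ℍ[ℝ])
    (hchi : ∀ k, chi k = B * B - Matrix.diagonal (fun _ => A k k + star (A k k)) * B +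
      Matrix.diagonal (fun _ => ((Quaternion.normSq (A k k) : ℝ) : ℍ[ℝ])))
    (W : Fin n → Matrix (Fin m) (Fin m) ℍ[ℝ])
    (hW : ∀ k, chi k * W k = 1 ∧ W k * chi k = 1)
    (C : Matrix (Fin n) (Fin m) ℍ[ℝ]) 
        (X : Matrix (Fin n) (Fin m) ℍ[ℝ]) (hX : A * X - X * B = C) 
        (k : Fin n) : (Matrix.of fun (_ : Fin 1) jc => X k jc) =
          -(((Matrix.of fun (_ : Fin 1) jc => C k jc) * B -
              star (A k k) • Matrix.of fun (_ : Fin 1) jc => C k jc) * W k) +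
            ∑ j : Fin n, if j < k then
              ((A k j • Matrix.of fun (_ : Fin 1) jc => X j jc) * B -
                star (A k k) • (A k j • Matrix.of fun (_ : Fin 1) jc => X j jc)) * W k
            else 0 := by
  have hD : A k k • (Matrix.of fun (_ : Fin 1) jc => X k jc)
      - (Matrix.of fun (_ : Fin 1) jc => X k jc) * B
      = (Matrix.of fun (_ : Fin 1) jc => C k jc)
        - ∑ j ∈ Finset.univ.filter (· < k), A k j • (Matrix.of fun (_ : Fin 1) jc => X j jc) := by
    ext1 i c
    have h1 : ∑ j, A k j * X j c = (∑ j ∈ Finset.univ.filter (· < k), A k j * X j c)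
        + A k k * X k c := by
      rw [← Finset.sum_filter_add_sum_filter_not Finset.univ (· < k)]
      congr 1
      apply Finset.sum_eq_single_of_mem
      · simp
      · intro j hj hne
        simp only [Finset.mem_filter, Finset.mem_univ, true_and, not_lt] at hj
        rw [hA k j (lt_of_le_of_ne hj hne.symm), zero_mul]
    have h2 := congrFun (congrFun hX k) c
    rw [Matrix.sub_apply, Matrix.mul_apply, h1] at h2
    simp only [Matrix.sub_apply, Matrix.smul_apply, Matrix.of_apply, Matrix.sum_apply, smul_eq_mul]
    rw [← h2, Matrix.mul_apply, Matrix.mul_apply]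
    simp only [Matrix.of_apply]
    abel
  have := syl_row B (chi k) (W k) (A k k) (hchi k) (hW k).1 _ _ hD
  rw [this, ← Finset.sum_filter, ← Matrix.sum_mul, Finset.sum_sub_distrib, ← Matrix.sum_mul,
    ← Finset.smul_sum]
  simp only [Matrix.sub_mul, smul_sub]
  abel

/-- Let `A ∈ ℍ^{n×n}` be lower triangular and let `B ∈ ℍ^{m×m}` be such
that each `𝒳_{[α_{k,k}]}(B) = B² − (α_{k,k}+ᾱ_{k,k})B + |α_{k,k}|² I_m` is invertible, with
two-sided inverse `W k`.  Then `AX − XB = C` has a unique solution `X`, whose rows satisfy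
`X̃_k = −(ρ_{ᾱ_{k,k}} C̃_k)^{e_r}(B) (𝒳_{[α_{k,k}]}(B))⁻¹
      + Σ_{j<k} (ρ_{ᾱ_{k,k}} α_{k,j} X̃_j)^{e_r}(B) (𝒳_{[α_{k,k}]}(B))⁻¹`
(for `k = 0` the sum is empty, giving the initial row).  Here
`(ρ_ᾱ D)^{e_r}(B) = DB − ᾱD` for a row vector `D`, and rows are indexed from 0. -/
theorem sylvester_lower_triangular (n m : ℕ)
    (A : Matrix (Fin n) (Fin n) ℍ[ℝ]) (hA : ∀ i j : Fin n, i < j → A i j = 0)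
    (B : Matrix (Fin m) (Fin m) ℍ[ℝ])
    (chi : Fin n → Matrix (Fin m) (Fin m) ℍ[ℝ])
    (hchi : ∀ k, chi k = B * B - Matrix.diagonal (fun _ => A k k + star (A k k)) * B +
      Matrix.diagonal (fun _ => ((Quaternion.normSq (A k k) : ℝ) : ℍ[ℝ])))
    (W : Fin n → Matrix (Fin m) (Fin m) ℍ[ℝ])
    (hW : ∀ k, chi k * W k = 1 ∧ W k * chi k = 1)
    (C : Matrix (Fin n) (Fin m) ℍ[ℝ]) :
    (∃! X : Matrix (Fin n) (Fin m) ℍ[ℝ], A * X - X * B = C) ∧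
      ∀ X : Matrix (Fin n) (Fin m) ℍ[ℝ], A * X - X * B = C →
        ∀ k : Fin n, (Matrix.of fun (_ : Fin 1) jc => X k jc) =
          -(((Matrix.of fun (_ : Fin 1) jc => C k jc) * B -
              star (A k k) • Matrix.of fun (_ : Fin 1) jc => C k jc) * W k) +
            ∑ j : Fin n, if j < k then
              ((A k j • Matrix.of fun (_ : Fin 1) jc => X j jc) * B -
                star (A k k) • (A k j • Matrix.of fun (_ : Fin 1) jc => X j jc)) * W k
            else 0 := by
  have key := syl_formula n m A hA B chi hchi W hW
  refine ⟨?_, fun X hX k => key C X hX k⟩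
  let T : Matrix (Fin n) (Fin m) ℍ[ℝ] →ₗ[ℝ] Matrix (Fin n) (Fin m) ℍ[ℝ] :=
    { toFun := fun X => A * X - X * B
      map_add' := fun X Y => by
        rw [Matrix.mul_add, Matrix.add_mul]; abel
      map_smul' := fun r X => by
        simp only [Matrix.mul_smul, Matrix.smul_mul, smul_sub, RingHom.id_apply] }
  have hinj : Function.Injective T := by
    rw [injective_iff_map_eq_zero]
    intro X hX
    have hrow : ∀ N : ℕ, ∀ k : Fin n, k.val = N →
        (Matrix.of fun (_ : Fin 1) jc => X k jc) = 0 := by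
      intro N
      induction N using Nat.strong_induction_on with
      | _ N ih =>
        intro k hk
        rw [key 0 X hX k, Finset.sum_eq_zero]
        · have : (Matrix.of fun (_ : Fin 1) jc => (0 : Matrix (Fin n) (Fin m) ℍ[ℝ]) k jc) = 0 := rfl
          rw [this]; simp
        · intro j _
          split_ifs with hj
          · rw [ih j.val (by rw [← hk]; exact hj) j rfl]; simp
          · rfl
    ext1 k c
    exact congrFun (congrFun (hrow k.val k rfl) 0) c
  have hsurj : Function.Surjective T := LinearMap.surjective_of_injective hinj
  obtain ⟨X, hX⟩ := hsurj C
  exact ⟨X, hX, fun Y hY => hinj (hY.trans hX.symm)⟩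
end

section
/- Let α and β be non-real quaternions that are conjugate (α = h⁻¹βh for some nonzero h ∈ ℍ), and let c ∈ ℍ. Then the equation αx − xβ = c has a solution x ∈ ℍ if and only if ᾱc = cβ. Moreover, if ᾱc = cβ, then x₀ = (2 Im(α))⁻¹ c is a solution, x₀ = −c (2 Im(β))⁻¹, and the full solution set is x₀ + {y ∈ ℍ : αy = yβ}. -/
open Quaternion

/-- Let `α, β` be conjugate non-real quaternions and `c ∈ ℍ`.  Then
`αx − xβ = c` has a solution iff `ᾱc = cβ`.  Moreover, if `ᾱc = cβ`, then
`x₀ = (2 Im α)⁻¹ c` is a solution, `x₀ = −c (2 Im β)⁻¹`, and the full solution set is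
`x₀ + {y : αy = yβ}`. -/
theorem sylvester_scalar_singular (α β c : ℍ[ℝ])
    (hα : α.im ≠ 0) (hβ : β.im ≠ 0)
    (hconj : ∃ h : ℍ[ℝ], h ≠ 0 ∧ α = h⁻¹ * β * h) :
    ((∃ x : ℍ[ℝ], α * x - x * β = c) ↔ star α * c = c * β) ∧
      (star α * c = c * β →
        α * ((2 * α.im)⁻¹ * c) - ((2 * α.im)⁻¹ * c) * β = c ∧
        (2 * α.im)⁻¹ * c = -(c * (2 * β.im)⁻¹) ∧
        {x : ℍ[ℝ] | α * x - x * β = c} =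
          (fun y => (2 * α.im)⁻¹ * c + y) '' {y : ℍ[ℝ] | α * y = y * β}) := by
  obtain ⟨h, hh, hαβ⟩ := hconj
  have hre : α.re = β.re := by
    have key : ∀ a b : ℍ[ℝ], (a * b).re = (b * a).re := by
      intro a b
      simp only [Quaternion.re_mul]
      ring
    rw [hαβ, key, ← mul_assoc, mul_inv_cancel₀ hh, one_mul]
  have hn : normSq α = normSq β := by
    have h0 : normSq h ≠ 0 := by simpa using hh
    rw [hαβ, map_mul, map_mul, map_inv₀]
    field_simp
  have hsα : star α = ((2 * α.re : ℝ) : ℍ[ℝ]) - α := by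
    ext <;> simp <;> ring
  have hsβ : star β = ((2 * α.re : ℝ) : ℍ[ℝ]) - β := by
    rw [hre]
    ext <;> simp <;> ring
  have hu : 2 * α.im = α - star α := by
    rw [two_mul]
    ext <;> simp
  have hv : 2 * β.im = β - star β := by
    rw [two_mul]
    ext <;> simp
  have two0 : (2 : ℍ[ℝ]) ≠ 0 := by
    intro h2
    have h3 : ((2 : ℍ[ℝ])).re = 0 := by rw [h2]; rfl
    rw [show (2 : ℍ[ℝ]) = 1 + 1 from one_add_one_eq_two.symm, Quaternion.re_add,
      Quaternion.re_one] at h3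
    norm_num at h3
  have hu0 : 2 * α.im ≠ 0 := mul_ne_zero two0 hα
  have hv0 : 2 * β.im ≠ 0 := mul_ne_zero two0 hβ
  have hnα : star α * α = ((normSq α : ℝ) : ℍ[ℝ]) := Quaternion.star_mul_self α
  have hnβ : star β * β = ((normSq α : ℝ) : ℍ[ℝ]) := by
    rw [hn]; exact Quaternion.star_mul_self β
  generalize ((2 * α.re : ℝ)) = t at *
  generalize (normSq α) = n at *
  have tc : ∀ x : ℍ[ℝ], (t : ℍ[ℝ]) * x = x * t := fun x => Quaternion.coe_commutes t x
  have nc : ∀ x : ℍ[ℝ], (n : ℍ[ℝ]) * x = x * n := fun x => Quaternion.coe_commutes n x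
  have nec : ∀ x, star α * (α * x - x * β) = (α * x - x * β) * β := by
    intro x
    have e1 : star α * (α * x) = x * (star β * β) := by
      rw [← mul_assoc, hnα, hnβ, nc]
    rw [mul_sub, e1, hsα, hsβ, sub_mul (t : ℍ[ℝ]) α, sub_mul (t : ℍ[ℝ]) β, tc β, tc (x * β)]
    noncomm_ring
  have suf : star α * c = c * β →
      α * ((2 * α.im)⁻¹ * c) - ((2 * α.im)⁻¹ * c) * β = c := by
    intro hc
    have hcomm : Commute α (2 * α.im) := by
      rw [hu, hsα]
      exact (Commute.refl α).sub_right
        (Commute.sub_right (tc α).symm (Commute.refl α))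
    have h2 : α * (2 * α.im)⁻¹ = (2 * α.im)⁻¹ * α := hcomm.inv_right₀
    rw [← mul_assoc, h2, mul_assoc, mul_assoc, ← hc, ← mul_sub, ← sub_mul, ← hu,
      inv_mul_cancel_left₀ hu0]
  refine ⟨⟨?_, fun hc => ⟨_, suf hc⟩⟩, fun hc => ⟨suf hc, ?_, ?_⟩⟩
  · rintro ⟨x, rfl⟩
    exact nec x
  · have e : c * (2 * β.im) = -((2 * α.im) * c) := by
      rw [hu, hv, sub_mul, hc, mul_sub, hsβ, mul_sub, ← hc, ← tc, hsα]
      noncomm_ring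
    have e2 : c = -((2 * α.im) * c) * (2 * β.im)⁻¹ := by
      rw [← e, mul_inv_cancel_right₀ hv0]
    have e3 : (2 * α.im)⁻¹ * c = (2 * α.im)⁻¹ * (-((2 * α.im) * c) * (2 * β.im)⁻¹) := by
      rw [← e2]
    rw [e3, neg_mul, mul_neg, mul_assoc, inv_mul_cancel_left₀ hu0]
  · have hs := suf hc
    generalize (2 * α.im)⁻¹ * c = x0 at *
    ext x
    simp only [Set.mem_ofPred_eq, Set.mem_image]
    constructor
    · intro hx
      refine ⟨x - x0, ?_, by abel⟩
      rw [← sub_eq_zero, mul_sub, sub_mul]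
      calc _ = (α * x - x * β) - (α * x0 - x0 * β) := by abel
        _ = 0 := by rw [hx, hs, sub_self]
    · rintro ⟨y, hy, rfl⟩
      rw [mul_add, add_mul, hy]
      calc _ = α * x0 - x0 * β := by abel
        _ = c := hs
end

section
/- With the singular-case setup in the context (spherical chains 𝛂, 𝛃 in the same conjugacy class, m ≤ n, data d_{i,j}, recursively defined Γ_{k,j}, and quantities S_j): if S_j = 0 for j = 1, …, m, then Δ_{k,j} := α_k Γ_{k,j} − Γ_{k,j} β_j − c_{k,j} + Γ_{k−1,j} − Γ_{k,j−1} = 0 for all indices k ≥ 1, j ≥ 1 with k < n, j ≤ m, and k + j ≤ n. -/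
open Quaternion Matrix

lemma sgl_conj {a b h : ℍ[ℝ]} (hh : h ≠ 0) (e : a = h⁻¹ * b * h) :
    a.re = b.re ∧ normSq a = normSq b := by
  have e2 : h * a = b * h := by
    rw [e, ← mul_assoc, ← mul_assoc, mul_inv_cancel₀ hh, one_mul]
  have hn : normSq h ≠ 0 := by simpa using hh
  constructor
  · have e3 : h * a * star h = b * (h * star h) := by rw [e2, mul_assoc]
    have e4 := congrArg (fun q : ℍ[ℝ] => q.re) e3
    rw [Quaternion.self_mul_star] at e4
    simp at e4
    rw [normSq_def'] at e4 hn
    apply mul_right_cancel₀ hn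
    linear_combination e4
  · have := congrArg normSq e2
    rw [map_mul, map_mul, mul_comm] at this
    exact mul_right_cancel₀ hn this

lemma sgl_img {a b : ℍ[ℝ]} (h1 : a.re = b.re) (h2 : normSq a = normSq b) (x : ℍ[ℝ]) :
    a * x * b + star a * x * b = x * b * b + star a * a * x ∧
    a * x * b + star a * x * b = x * b * b + a * star a * x ∧
    x * (b + star b) = (a + star a) * x := by
  have ta : a + star a = ((2 * a.re : ℝ) : ℍ[ℝ]) := Quaternion.self_add_star' a
  have tb : b + star b = ((2 * b.re : ℝ) : ℍ[ℝ]) := Quaternion.self_add_star' b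
  have na : star a * a = ((normSq a : ℝ) : ℍ[ℝ]) := Quaternion.star_mul_self a
  have na' : a * star a = ((normSq a : ℝ) : ℍ[ℝ]) := Quaternion.self_mul_star a
  have nb : star b * b = ((normSq b : ℝ) : ℍ[ℝ]) := Quaternion.star_mul_self b
  have tt : x * (b + star b) = (a + star a) * x := by
    rw [ta, tb, h1]; exact (Quaternion.coe_commutes _ x).symm
  have key : a * x * b + star a * x * b = x * b * b + star a * a * x := by
    rw [na, h2, Quaternion.coe_commutes, ← nb, ← add_mul, ← add_mul, ← tt]
    noncomm_ring
  exact ⟨key, by rw [na', ← na]; exact key, tt⟩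

/-- singular case, key lemma.  Let `𝛂 = (α_1,…,α_n)` and
`𝛃 = (β_1,…,β_m)`, `m ≤ n`, be spherical chains in the same conjugacy class, let
`c_{i,j}` be the entries of `C` (with zero conventions for nonpositive indices), and let
`d_{i,j}`, `Γ_{k,j}`, `S_j` be as in the context.  If `S_j = 0` for `j = 1,…,m`, then
`Δ_{k,j} = α_k Γ_{k,j} − Γ_{k,j} β_j − c_{k,j} + Γ_{k−1,j} − Γ_{k,j−1} = 0`
for all `k ≥ 1`, `j ≥ 1` with `k < n`, `j ≤ m`, `k + j ≤ n`.
(All indexing is 1-based; index `0` realizes the "nonpositive index ↦ 0" convention,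
together with truncated subtraction on `ℕ`.) -/
theorem singular_gamma_lemma (n m : ℕ) (hmn : m ≤ n) (α β : ℕ → ℍ[ℝ])
    (hαconj : ∀ i j, 1 ≤ i → i ≤ n → 1 ≤ j → j ≤ n →
      ∃ h : ℍ[ℝ], h ≠ 0 ∧ α i = h⁻¹ * α j * h)
    (hβconj : ∀ i j, 1 ≤ i → i ≤ m → 1 ≤ j → j ≤ m →
      ∃ h : ℍ[ℝ], h ≠ 0 ∧ β i = h⁻¹ * β j * h)
    (hαβconj : ∀ i j, 1 ≤ i → i ≤ n → 1 ≤ j → j ≤ m →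
      ∃ h : ℍ[ℝ], h ≠ 0 ∧ α i = h⁻¹ * β j * h)
    (hαchain : ∀ k, 1 ≤ k → k < n → α (k + 1) ≠ star (α k))
    (hβchain : ∀ k, 1 ≤ k → k < m → β (k + 1) ≠ star (β k))
    (c : ℕ → ℕ → ℍ[ℝ]) (hc0 : ∀ j, c 0 j = 0) (hc0' : ∀ i, c i 0 = 0)
    (d : ℕ → ℕ → ℍ[ℝ])
    (hd : ∀ i j, d i j = c i j * β j - star (α i) * c i j + c i (j - 1) + c (i - 1) j)
    (Γ : ℕ → ℕ → ℍ[ℝ]) (hΓ0 : ∀ j, Γ 0 j = 0) (hΓ0' : ∀ k, Γ k 0 = 0)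
    (hΓ : ∀ k j, 1 ≤ k → 1 ≤ j → j ≤ m → k + j ≤ n →
      Γ k j = (α k - star (α (k + 1)))⁻¹ *
        (d (k + 1) j + Γ (k + 1) (j - 2) - Γ (k - 1) j -
          Γ (k + 1) (j - 1) * (star (β j) - β (j - 1))))
    (hS : ∀ j, 1 ≤ j → j ≤ m →
      d 1 j + Γ 1 (j - 1) * (β (j - 1) - star (β j)) + Γ 1 (j - 2) = 0) :
    ∀ k j, 1 ≤ k → 1 ≤ j → k < n → j ≤ m → k + j ≤ n →
      α k * Γ k j - Γ k j * β j - c k j + Γ (k - 1) j - Γ k (j - 1) = 0 := by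
  have hα0 : ∀ i j, 1 ≤ i → i ≤ n → 1 ≤ j → j ≤ m →
      (α i).re = (β j).re ∧ normSq (α i) = normSq (β j) := by
    intro i j h1 h2 h3 h4
    obtain ⟨h, hh, e⟩ := hαβconj i j h1 h2 h3 h4
    exact sgl_conj hh e
  obtain ⟨Δ, hΔ⟩ : ∃ Δ : ℕ → ℕ → ℍ[ℝ], ∀ k j, Δ k j =
      α k * Γ k j - Γ k j * β j - c k j + Γ (k - 1) j - Γ k (j - 1) := ⟨_, fun _ _ => rfl⟩
  have hΔ0 : ∀ j, Δ 0 j = 0 := by intro j; simp [hΔ, hΓ0, hc0]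
  have hΔ0' : ∀ k, Δ k 0 = 0 := by intro k; simp [hΔ, hΓ0', hc0']
  have rel : ∀ k j, 1 ≤ j → j ≤ m → k + j ≤ n →
      Δ (k + 1) j * β j - star (α (k + 1)) * Δ (k + 1) j = -Δ k j - Δ (k + 1) (j - 1) := by
    intro k j h1 h2 h3
    obtain ⟨re1, nq1⟩ := hα0 (k + 1) j (by omega) (by omega) h1 h2
    have K := (sgl_img re1 nq1 (Γ (k + 1) j)).1
    have T := (sgl_img re1 nq1 (Γ (k + 1) (j - 1))).2.2
    have D := hd (k + 1) j
    have G : α k * Γ k j - star (α (k + 1)) * Γ k j =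
        d (k + 1) j + Γ (k + 1) (j - 2) - Γ (k - 1) j -
          Γ (k + 1) (j - 1) * (star (β j) - β (j - 1)) := by
      rcases Nat.eq_zero_or_pos k with rfl | hk
      · have := hS j h1 h2
        simp only [hΓ0, Nat.zero_sub, zero_add, mul_zero, sub_zero]
        rw [← this]
        noncomm_ring
      · have hne : α k - star (α (k + 1)) ≠ 0 := by
          intro h
          apply hαchain k hk (by omega)
          rw [sub_eq_zero.mp h, star_star]
        rw [← sub_mul, hΓ k j hk h1 h2 h3, mul_inv_cancel_left₀ hne]
    have hj : j - 1 - 1 = j - 2 := by omega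
    simp only [hΔ, Nat.add_sub_cancel, hj] at D ⊢
    linear_combination (norm := noncomm_ring) K + D + G - T
  have main : ∀ j, j ≤ m → ∀ k, k + j ≤ n → Δ k j = 0 := by
    intro j
    induction j with
    | zero => intro _ k _; exact hΔ0' k
    | succ j ihj =>
      intro hjm k
      induction k with
      | zero => intro _; exact hΔ0 _
      | succ k ihk =>
        intro hk
        have r1 := rel k (j + 1) (by omega) hjm (by omega)
        have r2 := rel (k + 1) (j + 1) (by omega) hjm hk
        simp only [Nat.add_sub_cancel] at r1 r2
        rw [ihk (by omega), ihj (by omega) (k + 1) (by omega)] at r1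
        rw [ihj (by omega) (k + 1 + 1) (by omega)] at r2
        obtain ⟨re1, nq1⟩ := hα0 (k + 1 + 1) (j + 1) (by omega) (by omega) (by omega) hjm
        have K := (sgl_img re1 nq1 (Δ (k + 1 + 1) (j + 1))).2.1
        have e : Δ (k + 1) (j + 1) = star (α (k + 1 + 1)) * Δ (k + 1 + 1) (j + 1) -
            Δ (k + 1 + 1) (j + 1) * β (j + 1) := by
          linear_combination (norm := noncomm_ring) r2
        have e2 : Δ (k + 1) (j + 1) * β (j + 1) = α (k + 1 + 1) * Δ (k + 1) (j + 1) := by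
          rw [e]
          linear_combination (norm := noncomm_ring) K
        have e3 : (α (k + 1 + 1) - star (α (k + 1))) * Δ (k + 1) (j + 1) = 0 := by
          linear_combination (norm := noncomm_ring) r1 - e2
        rcases mul_eq_zero.mp e3 with h | h
        · exact absurd (sub_eq_zero.mp h) (hαchain (k + 1) (by omega) (by omega))
        · exact h
  intro k j _ _ _ hj hkj
  rw [← hΔ]
  exact main j hj k hkj
end

section
/- With the singular-case setup in the context, let A = 𝒥_𝛂 ∈ ℍ^{n×n} be the lower bidiagonal matrix with diagonal α_1,…,α_n and ones on the first subdiagonal, and B = 𝒥_𝛃ᵀ ∈ ℍ^{m×m} the upper bidiagonal matrix with diagonal β_1,…,β_m and ones on the first superdiagonal. Then every solution X = [x_{i,j}] ∈ ℍ^{n×m} of AX − XB = C satisfies x_{i,j} = Γ_{i,j} for all indices i ≥ 1, j ≥ 1 with i < n, j ≤ m, and i + j ≤ n. In particular, all entries of a solution on the counter-diagonals i + j ≤ n are uniquely determined by A, B, C. -/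
open Quaternion Matrix

lemma quat_re_mul_comm (a b : ℍ[ℝ]) : (a * b).re = (b * a).re := by
  simp only [Quaternion.re_mul]; ring

lemma quat_conj_inv (a b h : ℍ[ℝ]) (hh : h ≠ 0) (e : a = h⁻¹ * b * h) :
    a.re = b.re ∧ normSq a = normSq b := by
  constructor
  · rw [e, quat_re_mul_comm, ← mul_assoc, mul_inv_cancel₀ hh, one_mul]
  · have : normSq h ≠ 0 := by simpa using hh
    rw [e, map_mul, map_mul, Quaternion.normSq_inv]; field_simp

lemma quat_star_eq (a b h : ℍ[ℝ]) (hh : h ≠ 0) (e : a = h⁻¹ * b * h) :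
    star b = a + star a - b := by
  have h1 := (quat_conj_inv a b h hh e).1
  rw [Quaternion.self_add_star', h1, ← Quaternion.self_add_star']; abel

lemma quat_sylv_zero (a b x h : ℍ[ℝ]) (hh : h ≠ 0) (e : a = h⁻¹ * b * h) :
    (a * x - x * b) * b - star a * (a * x - x * b) = 0 := by
  obtain ⟨h1, h2⟩ := quat_conj_inv a b h hh e
  have e1 : (a + star a) * x = x * (b + star b) := by
    rw [Quaternion.self_add_star', Quaternion.self_add_star', h1]
    exact Quaternion.coe_commutes _ _
  have e2 : star a * a * x = x * (star b * b) := by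
    rw [Quaternion.star_mul_self, Quaternion.star_mul_self, h2]
    exact Quaternion.coe_commutes _ _
  calc _ = ((a + star a) * x) * b - x * b * b - star a * a * x := by noncomm_ring
    _ = 0 := by rw [e1, e2]; noncomm_ring

lemma quat_key (a a' b b' c c1 c2 x x1 x2 x3 x4 x5 h : ℍ[ℝ]) (hh : h ≠ 0)
    (e : a = h⁻¹ * b * h)
    (E : a * x + x1 - x * b - x2 = c)
    (E1 : a * x2 + x3 - x2 * b' - x4 = c1)
    (E2 : a' * x1 + x5 - x1 * b - x3 = c2) :
    (a' - star a) * x1 =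
      c * b - star a * c + c1 + c2 + x4 - x5 - x2 * (star b - b') := by
  have z := quat_sylv_zero a b x h hh e
  have s := quat_star_eq a b h hh e
  have e1 : (a + star a) * x2 = x2 * (a + star a) := by
    rw [Quaternion.self_add_star']
    exact Quaternion.coe_commutes _ _
  have e2 : x2 * star b = (a + star a) * x2 - x2 * b := by rw [s, mul_sub, e1]
  have e3 : c * b - star a * c = ((a * x - x * b) * b - star a * (a * x - x * b))
      + (x1 - x2) * b - star a * (x1 - x2) := by rw [← E]; noncomm_ring
  rw [e3, z, ← E1, ← E2, mul_sub x2, e2]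
  noncomm_ring

/-- singular case, rigidity of solutions.  With spherical chains
`𝛂 = (α_1,…,α_n)`, `𝛃 = (β_1,…,β_m)`, `m ≤ n`, in the same conjugacy class,
`A = 𝒥_𝛂` lower bidiagonal, `B = 𝒥_𝛃ᵀ` upper bidiagonal, and `d_{i,j}`, `Γ_{k,j}` as in
the context, every solution `X = [x_{i,j}]` of `AX − XB = C` satisfies `x_{i,j} = Γ_{i,j}`
for all `i ≥ 1`, `j ≥ 1` with `i < n`, `j ≤ m`, `i + j ≤ n`.
(All indexing of `α, β, c, d, Γ` is 1-based, with index `0` realizing the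
"nonpositive index ↦ 0" convention; the matrices are indexed by `Fin`.) -/
theorem singular_solution_rigidity (n m : ℕ) (hmn : m ≤ n) (α β : ℕ → ℍ[ℝ])
    (hαconj : ∀ i j, 1 ≤ i → i ≤ n → 1 ≤ j → j ≤ n →
      ∃ h : ℍ[ℝ], h ≠ 0 ∧ α i = h⁻¹ * α j * h)
    (hβconj : ∀ i j, 1 ≤ i → i ≤ m → 1 ≤ j → j ≤ m →
      ∃ h : ℍ[ℝ], h ≠ 0 ∧ β i = h⁻¹ * β j * h)
    (hαβconj : ∀ i j, 1 ≤ i → i ≤ n → 1 ≤ j → j ≤ m →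
      ∃ h : ℍ[ℝ], h ≠ 0 ∧ α i = h⁻¹ * β j * h)
    (hαchain : ∀ k, 1 ≤ k → k < n → α (k + 1) ≠ star (α k))
    (hβchain : ∀ k, 1 ≤ k → k < m → β (k + 1) ≠ star (β k))
    (c : ℕ → ℕ → ℍ[ℝ]) (hc0 : ∀ j, c 0 j = 0) (hc0' : ∀ i, c i 0 = 0)
    (d : ℕ → ℕ → ℍ[ℝ])
    (hd : ∀ i j, d i j = c i j * β j - star (α i) * c i j + c i (j - 1) + c (i - 1) j)
    (Γ : ℕ → ℕ → ℍ[ℝ]) (hΓ0 : ∀ j, Γ 0 j = 0) (hΓ0' : ∀ k, Γ k 0 = 0)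
    (hΓ : ∀ k j, 1 ≤ k → 1 ≤ j → j ≤ m → k + j ≤ n →
      Γ k j = (α k - star (α (k + 1)))⁻¹ *
        (d (k + 1) j + Γ (k + 1) (j - 2) - Γ (k - 1) j -
          Γ (k + 1) (j - 1) * (star (β j) - β (j - 1))))
    (A : Matrix (Fin n) (Fin n) ℍ[ℝ])
    (hA : A = Matrix.of fun (i j : Fin n) =>
      if (i : ℕ) = (j : ℕ) then α ((i : ℕ) + 1)
      else if (i : ℕ) = (j : ℕ) + 1 then 1 else 0)
    (B : Matrix (Fin m) (Fin m) ℍ[ℝ])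
    (hB : B = Matrix.of fun (i j : Fin m) =>
      if (i : ℕ) = (j : ℕ) then β ((i : ℕ) + 1)
      else if (j : ℕ) = (i : ℕ) + 1 then 1 else 0)
    (C : Matrix (Fin n) (Fin m) ℍ[ℝ])
    (hC : C = Matrix.of fun (i : Fin n) (j : Fin m) => c ((i : ℕ) + 1) ((j : ℕ) + 1)) :
    ∀ X : Matrix (Fin n) (Fin m) ℍ[ℝ], A * X - X * B = C →
      ∀ i j, ∀ hi1 : 1 ≤ i, ∀ hj1 : 1 ≤ j, ∀ hin : i < n, ∀ hjm : j ≤ m, i + j ≤ n →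
        X ⟨i - 1, by omega⟩ ⟨j - 1, by omega⟩ = Γ i j := by
  intro X hX
  obtain ⟨x, hx⟩ : ∃ x : ℕ → ℕ → ℍ[ℝ], x = fun i j =>
    if h : (1 ≤ i ∧ i ≤ n) ∧ (1 ≤ j ∧ j ≤ m) then
      X ⟨i - 1, by omega⟩ ⟨j - 1, by omega⟩ else 0 := ⟨_, rfl⟩
  have x0 : ∀ j, x 0 j = 0 := by intro j; simp [hx]
  have x0' : ∀ i, x i 0 = 0 := by intro j; simp [hx]
  have xX : ∀ (i : Fin n) (j : Fin m), X i j = x (i + 1) (j + 1) := by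
    intro i j
    have h : (1 ≤ (i : ℕ) + 1 ∧ (i : ℕ) + 1 ≤ n) ∧ (1 ≤ (j : ℕ) + 1 ∧ (j : ℕ) + 1 ≤ m) := by
      omega
    rw [hx]
    simp only [dif_pos h]
    rfl
  have E0 : ∀ i j, i < n → j < m →
      α (i + 1) * x (i + 1) (j + 1) + x i (j + 1) - x (i + 1) (j + 1) * β (j + 1)
        - x (i + 1) j = c (i + 1) (j + 1) := by
    intro i j hi hj
    have h := congrFun (congrFun hX ⟨i, hi⟩) ⟨j, hj⟩
    rw [Matrix.sub_apply, Matrix.mul_apply, Matrix.mul_apply, hC, hA, hB] at h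
    simp only [Matrix.of_apply, xX] at h
    have s1 : ∑ k : Fin n, (if i = (k : ℕ) then α (i + 1)
        else if i = (k : ℕ) + 1 then 1 else 0) * x (k + 1) (j + 1)
        = α (i + 1) * x (i + 1) (j + 1) + x i (j + 1) := by
      rw [Fin.sum_univ_eq_sum_range (fun k => (if i = k then α (i + 1)
        else if i = k + 1 then 1 else 0) * x (k + 1) (j + 1)) n]
      rcases i with _ | i
      · rw [Finset.sum_eq_single 0]
        · simp [x0]
        · intro b _ hb; simp [Ne.symm hb]
        · intro hb; simp at hb; omega
      · rw [Finset.sum_eq_add (i + 1) i (by omega)]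
        · simp
        · intro b _ hb
          rw [if_neg (by omega), if_neg (by omega), zero_mul]
        · intro hb; simp at hb; omega
        · intro hb; simp at hb; omega
    have s2 : ∑ k : Fin m, x (i + 1) (k + 1) * (if (k : ℕ) = j then β (k + 1)
        else if j = (k : ℕ) + 1 then 1 else 0)
        = x (i + 1) (j + 1) * β (j + 1) + x (i + 1) j := by
      rw [Fin.sum_univ_eq_sum_range (fun k => x (i + 1) (k + 1) * (if k = j then β (k + 1)
        else if j = k + 1 then 1 else 0)) m]
      rcases j with _ | j
      · rw [Finset.sum_eq_single 0]
        · simp [x0']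
        · intro b _ hb; simp [hb]
        · intro hb; simp at hb; omega
      · rw [Finset.sum_eq_add (j + 1) j (by omega)]
        · simp
        · intro b _ hb
          rw [if_neg (by omega), if_neg (by omega), mul_zero]
        · intro hb; simp at hb; omega
        · intro hb; simp at hb; omega
    rw [s1, s2] at h
    rw [← h]; abel
  have E : ∀ i j, 1 ≤ i → i ≤ n → j ≤ m →
      α i * x i j + x (i - 1) j - x i j * β j - x i (j - 1) = c i j := by
    intro i j hi hin hj
    obtain ⟨i, rfl⟩ : ∃ k, i = k + 1 := ⟨i - 1, by omega⟩
    rcases j with _ | j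
    · simp [x0', hc0']
    · exact E0 i j (by omega) (by omega)
  have main : ∀ j, j ≤ m → ∀ i, i + j ≤ n → x i j = Γ i j := by
    intro j
    induction j using Nat.strong_induction_on with
    | _ j ihj =>
      intro hj i
      induction i with
      | zero => intro _; rw [x0, hΓ0]
      | succ i ihi =>
        intro hij
        rcases Nat.eq_zero_or_pos j with rfl | hj1
        · rw [x0', hΓ0']
        obtain ⟨h, hh, e⟩ := hαβconj (i + 1 + 1) j (by omega) (by omega) hj1 hj
        have K := quat_key _ (α (i + 1)) _ (β (j - 1)) _ _ _ _ _ _ _ _ _ h hh e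
          (E (i + 1 + 1) j (by omega) (by omega) hj)
          (E (i + 1 + 1) (j - 1) (by omega) (by omega) (by omega))
          (E (i + 1) j (by omega) (by omega) hj)
        have hne : α (i + 1) - star (α (i + 1 + 1)) ≠ 0 := by
          intro h0
          apply hαchain (i + 1) (by omega) (by omega)
          rw [sub_eq_zero.mp h0, star_star]
        rw [hΓ (i + 1) j (by omega) hj1 hj hij, eq_inv_mul_iff_mul_eq₀ hne]
        have g1 : x (i + 1 + 1) (j - 1) = Γ (i + 1 + 1) (j - 1) :=
          ihj (j - 1) (by omega) (by omega) _ (by omega)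
        have g2 : x (i + 1 + 1) (j - 1 - 1) = Γ (i + 1 + 1) (j - 2) :=
          ihj (j - 2) (by omega) (by omega) _ (by omega)
        have g3 := ihi (by omega)
        simp only [Nat.add_sub_cancel] at K
        rw [g1, g2, g3] at K
        rw [K, hd]
        simp only [Nat.add_sub_cancel]
  intro i j hi1 hj1 hin hjm hij
  rw [xX, ← main j hjm i hij]
  congr 1 <;> simp <;> omega
end

section
/- Let α and β be conjugate non-real quaternions, let n ≥ m ≥ 1, let A = 𝒥_n(α) and B = 𝒥_m(β)ᵀ be quaternion Jordan blocks, and let C = [c_{k,j}] ∈ ℍ^{n×m}. With the convention c_{k,j} = 0 when k ≤ 0 or j ≤ 0, set d_{k,j} = c_{k,j}β − ᾱc_{k,j} + c_{k−1,j} + c_{k,j−1}, with the convention d_{k,j} = 0 when k ≤ 0 or j ≤ 0. Then the Sylvester equation AX − XB = C has a solution X ∈ ℍ^{n×m} if and only if, for every j = 1, …, m, Σ_{ℓ ≥ 0} Im(α)·d_{2ℓ+1, j−2ℓ} + Σ_{ℓ ≥ 1} d_{2ℓ, j−2ℓ+1}·Im(β) = 0 (both sums are finite since terms with a nonpositive index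 vanish). -/
open Quaternion Matrix

/-- facts on conjugate quaternions -/
theorem sj_facts (α β : ℍ[ℝ]) (hα : α.im ≠ 0)
    (hconj : ∃ h : ℍ[ℝ], h ≠ 0 ∧ α = h⁻¹ * β * h) :
    ∃ r : ℝ, r ≠ 0 ∧ α.im * α.im = -(r : ℍ[ℝ]) ∧ β.im * β.im = -(r : ℍ[ℝ]) ∧
      α.re = β.re := by
  obtain ⟨h, h0, e⟩ := hconj
  have e1 : h * α = β * h := by
    rw [e]; simp [← mul_assoc, h0]
  have hre : α.re = β.re := by
    have h1 : (h⁻¹ * (β * h)).re = ((β * h) * h⁻¹).re := by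
      simp only [Quaternion.re_mul]; ring
    rw [mul_assoc β, mul_inv_cancel₀ h0, mul_one, ← mul_assoc, ← e] at h1
    exact h1
  have key : ∀ q : ℍ[ℝ], q.im * q.im = -((Quaternion.normSq q.im : ℝ) : ℍ[ℝ]) := by
    intro q
    rw [← Quaternion.self_mul_star, Quaternion.star_im]
    simp
  have e2 : h * α.im = β.im * h := by
    have ha : α.im = α - (α.re : ℍ[ℝ]) := by
      rw [eq_sub_iff_add_eq, add_comm, Quaternion.re_add_im]
    have hb : β.im = β - (α.re : ℍ[ℝ]) := by
      rw [hre, eq_sub_iff_add_eq, add_comm, Quaternion.re_add_im]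
    rw [ha, hb, mul_sub, sub_mul, e1, Quaternion.coe_commutes]
  have e3 : Quaternion.normSq α.im = Quaternion.normSq β.im := by
    have := congrArg Quaternion.normSq e2
    rw [map_mul, map_mul, mul_comm] at this
    exact mul_right_cancel₀ (by simpa using h0) this
  refine ⟨Quaternion.normSq α.im, by simpa using hα, key α, ?_, hre⟩
  rw [e3]; exact key β

/-- kernel/range decomposition of `x ↦ u x - x v` -/
theorem sj_decomp (u v : ℍ[ℝ]) (r : ℝ) (hr : r ≠ 0) (hu : u * u = -(r : ℍ[ℝ]))
    (hv : v * v = -(r : ℍ[ℝ])) (f : ℍ[ℝ]) :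
    ∃ k w : ℍ[ℝ], f = k + (u * w - w * v) ∧ u * k = k * v := by
  have h1 : u * (u * f) = -(r • f) := by
    rw [← mul_assoc, hu, neg_mul, Quaternion.coe_mul_eq_smul]
  have h2 : f * v * v = -(r • f) := by
    rw [mul_assoc, hv, mul_neg, Quaternion.mul_coe_eq_smul]
  have h3 : u * (u * f * v) = -(r • (f * v)) := by
    rw [← mul_assoc, h1, neg_mul, smul_mul_assoc]
  have h4 : u * f * v * v = -(r • (u * f)) := by
    rw [mul_assoc u, mul_assoc, h2, mul_neg, mul_smul_comm]
  refine ⟨(1/2 : ℝ) • f - (1/(2*r)) • (u * f * v), (-(1/(4*r))) • (u * f - f * v), ?_, ?_⟩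
  · simp only [mul_smul_comm, smul_mul_assoc, mul_sub, sub_mul, h1, h2, ← mul_assoc u f v]
    match_scalars <;> field_simp <;> norm_num
  · simp only [mul_smul_comm, smul_mul_assoc, mul_sub, sub_mul, h3, h4]
    match_scalars <;> field_simp

theorem sj_col (u v : ℍ[ℝ])
    (hdec : ∀ f : ℍ[ℝ], ∃ k w : ℍ[ℝ], f = k + (u * w - w * v) ∧ u * k = k * v)
    (f : ℕ → ℍ[ℝ]) :
    ∃ x : ℕ → ℍ[ℝ], u * x 0 = x 0 * v ∧
      ∀ i, f (i + 1) = u * x (i + 1) - x (i + 1) * v + x i := by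
  choose k w hkw hk using hdec
  let a : ℕ → ℍ[ℝ] := fun i => Nat.rec 0 (fun i p => w (f (i + 1) - p)) i
  have ha : ∀ i, a (i + 1) = w (f (i + 1) - a i) := fun i => rfl
  have ha0 : a 0 = 0 := rfl
  refine ⟨fun i => a i + k (f (i + 1) - a i), ?_, ?_⟩
  · simp only [ha0, zero_add, hk]
  · intro i
    have h1 := hkw (f (i + 1) - a i)
    rw [← ha] at h1
    have h2 := hk (f (i + 1 + 1) - a (i + 1))
    have h3 : f (i + 1) = k (f (i + 1) - a i) + (u * a (i + 1) - a (i + 1) * v) + a i := by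
      rw [← h1]; abel
    simp only [mul_add, add_mul, h2]
    nth_rewrite 1 [h3]
    abel

theorem sj_all (u v : ℍ[ℝ])
    (hdec : ∀ f : ℍ[ℝ], ∃ k w : ℍ[ℝ], f = k + (u * w - w * v) ∧ u * k = k * v)
    (c : ℕ → ℕ → ℍ[ℝ]) :
    ∃ x : ℕ → ℕ → ℍ[ℝ], (∀ i, x i 0 = 0) ∧ (∀ j, u * x 0 j = x 0 j * v) ∧
      ∀ i j, c (i + 1) (j + 1) =
        u * x (i + 1) (j + 1) - x (i + 1) (j + 1) * v + x i (j + 1) - x (i + 1) j := by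
  choose S hS0 hS using sj_col u v hdec
  let y : ℕ → ℕ → ℍ[ℝ] := fun j =>
    Nat.rec (fun _ => 0) (fun j p => S (fun i => c i (j + 1) + p i)) j
  have hy : ∀ j, y (j + 1) = S (fun i => c i (j + 1) + y j i) := fun j => rfl
  refine ⟨fun i j => y j i, fun i => rfl, ?_, ?_⟩
  · intro j
    cases j with
    | zero => simp [y]
    | succ j => simp only [hy]; exact hS0 _
  · intro i j
    have := hS (fun i => c i (j + 1) + y j i) i
    rw [← hy] at this
    exact eq_sub_of_add_eq this

theorem sj_core (u v : ℍ[ℝ]) (r : ℝ) (hu : u * u = -(r : ℍ[ℝ]))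
    (hv : v * v = -(r : ℍ[ℝ])) (c d x : ℕ → ℕ → ℍ[ℝ])
    (hc1 : ∀ j, c 0 j = 0) (hc2 : ∀ i, c i 0 = 0)
    (hd : ∀ i j, d i j = c i j * v + u * c i j + c (i - 1) j + c i (j - 1))
    (hx0 : ∀ i, x i 0 = 0) (hxk : ∀ j, u * x 0 j = x 0 j * v) (J : ℕ) (hJ : 1 ≤ J)
    (hx : ∀ i j, i + 1 ≤ J → j + 1 ≤ J → c (i + 1) (j + 1) =
        u * x (i + 1) (j + 1) - x (i + 1) (j + 1) * v + x i (j + 1) - x (i + 1) j) :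
    (∑ ℓ ∈ Finset.range (J + 1), u * d (2 * ℓ + 1) (J - 2 * ℓ)) +
          (∑ ℓ ∈ (Finset.range (J + 1)).filter (fun ℓ => 1 ≤ ℓ ∧ 2 * ℓ ≤ J),
            d (2 * ℓ) (J - 2 * ℓ + 1) * v) =
      -((2 * r) • x 0 J) + (2 : ℝ) • (u * x 0 (J - 1)) := by
  have hUU : ∀ t, u * (u * t) = -(r • t) := fun t => by
    rw [← mul_assoc, hu, neg_mul, Quaternion.coe_mul_eq_smul]
  have hVV : ∀ t, t * v * v = -(r • t) := fun t => by
    rw [mul_assoc, hv, mul_neg, Quaternion.mul_coe_eq_smul]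
  have hd0 : ∀ i, d i 0 = 0 := fun i => by simp [hd, hc2]
  -- values of d
  have hg : ∀ i, 1 ≤ i → d (i + 1) (J - i) =
      (2 : ℝ) • (u * x i (J - i)) - (2 : ℝ) • (x (i + 1) (J - (i + 1)) * v)
        + x (i - 1) (J - 1 - (i - 1)) - x (i + 1) (J - 1 - (i + 1)) := by
    intro i hi
    by_cases hiJ : J ≤ i
    · have a1 : J - i = 0 := by omega
      have a2 : J - (i + 1) = 0 := by omega
      have a3 : J - 1 - (i - 1) = 0 := by omega
      have a4 : J - 1 - (i + 1) = 0 := by omega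
      simp [a1, a2, a3, a4, hd0, hx0]
    · obtain ⟨i, rfl⟩ : ∃ p, i = p + 1 := ⟨i - 1, by omega⟩
      obtain ⟨q, hq⟩ : ∃ q, J = q + 1 + (i + 1) := ⟨J - i - 2, by omega⟩
      have a1 : J - (i + 1) = q + 1 := by omega
      have a2 : J - (i + 1 + 1) = q := by omega
      have a3 : J - 1 - (i + 1 - 1) = q + 1 := by omega
      have a4 : J - 1 - (i + 1 + 1) = q - 1 := by omega
      rw [a1, a2, a3, a4, hd]
      simp only [Nat.add_sub_cancel]
      rw [hx (i + 1) q (by omega) (by omega), hx i q (by omega) (by omega)]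
      cases q with
      | zero =>
        simp only [hc2, hx0, mul_add, add_mul, mul_sub, sub_mul, hUU, hVV, mul_zero, zero_mul,
          ← mul_assoc u]
        module
      | succ q =>
        rw [hx (i + 1) q (by omega) (by omega)]
        simp only [Nat.add_sub_cancel, mul_add, add_mul, mul_sub, sub_mul, hUU, hVV,
          ← mul_assoc u]
        module
  have hg0 : d 1 J = (2 : ℝ) • (u * x 0 J) - (2 : ℝ) • (x 1 (J - 1) * v)
        + x 0 (J - 1) - x 1 (J - 1 - 1) := by
    obtain ⟨q, rfl⟩ : ∃ q, J = q + 1 := ⟨J - 1, by omega⟩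
    rw [hd, hx 0 q (by omega) (by omega)]
    simp only [Nat.add_sub_cancel, Nat.sub_self, hc1, zero_add]
    cases q with
    | zero =>
      simp only [hc2, hx0, mul_add, add_mul, mul_sub, sub_mul, hUU, hVV, mul_zero, zero_mul,
        ← mul_assoc u, ← hxk]
      module
    | succ q =>
      have h1 := hx 0 q (by omega) (by omega)
      simp only [zero_add] at h1
      rw [h1]
      simp only [Nat.add_sub_cancel, mul_add, add_mul, mul_sub, sub_mul, hUU, hVV,
        ← mul_assoc u, ← hxk]
      module
  have hsum2 : (∑ ℓ ∈ (Finset.range (J + 1)).filter (fun ℓ => 1 ≤ ℓ ∧ 2 * ℓ ≤ J),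
            d (2 * ℓ) (J - 2 * ℓ + 1) * v) =
      ∑ k ∈ Finset.range (J + 1), d (2 * k + 1 + 1) (J - (2 * k + 1)) * v := by
    rw [Finset.sum_filter, Finset.sum_range_succ', Finset.sum_range_succ]
    have a1 : J - (2 * J + 1) = 0 := by omega
    simp only [a1, hd0, zero_mul]
    congr 1
    apply Finset.sum_congr rfl
    intro k _
    by_cases hk : 2 * (k + 1) ≤ J
    · rw [if_pos ⟨by omega, hk⟩]
      congr 2
      omega
    · rw [if_neg (by omega)]
      have : J - (2 * k + 1) = 0 := by omega
      rw [this, hd0, zero_mul]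
  let F : ℕ → ℍ[ℝ] := fun k => -((2 * r) • x (2 * k) (J - 2 * k))
    + (if k = 0 then u * x 0 (J - 1) else u * x (2 * k - 1) (J - 1 - (2 * k - 1)))
    + x (2 * k) (J - 1 - 2 * k) * v
  have hF : ∀ k, u * d (2 * k + 1) (J - 2 * k) + d (2 * k + 1 + 1) (J - (2 * k + 1)) * v
      = F k - F (k + 1) := by
    intro k
    have b1 : 2 * (k + 1) = 2 * k + 1 + 1 := by ring
    have b2 : 2 * k + 1 + 1 - 1 = 2 * k + 1 := by omega
    have e2 := hg (2 * k + 1) (by omega)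
    simp only [Nat.add_sub_cancel] at e2
    rcases Nat.eq_zero_or_pos k with rfl | hk
    · simp only [F, b1, b2, if_true, Nat.succ_ne_zero, if_false]
      rw [e2]
      simp only [mul_zero, zero_add, Nat.sub_zero, hg0, mul_add, add_mul, mul_sub, sub_mul,
        mul_smul_comm, smul_mul_assoc, hUU, hVV, ← mul_assoc u]
      module
    · have e1 := hg (2 * k) (by omega)
      simp only [F, b1, b2, if_neg (show k ≠ 0 by omega), Nat.succ_ne_zero, if_false]
      rw [e2, e1]
      simp only [mul_add, add_mul, mul_sub, sub_mul,
        mul_smul_comm, smul_mul_assoc, hUU, hVV, ← mul_assoc u]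
      module
  rw [hsum2, ← Finset.sum_add_distrib, Finset.sum_congr rfl (fun k _ => hF k),
    Finset.sum_range_sub']
  have a1 : J - 2 * (J + 1) = 0 := by omega
  have a2 : J - 1 - (2 * (J + 1) - 1) = 0 := by omega
  have a3 : J - 1 - 2 * (J + 1) = 0 := by omega
  simp only [F, a1, a2, a3, hx0, if_true, Nat.succ_ne_zero, if_false, mul_zero, Nat.sub_zero,
    ← hxk, zero_mul, smul_zero]
  module

theorem sj_sum1 {n : ℕ} (α : ℍ[ℝ]) (x : ℕ → ℍ[ℝ]) (hx : x 0 = 0) (i : Fin n) :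
    ∑ k : Fin n, (if (i : ℕ) = (k : ℕ) then α else if (i : ℕ) = (k : ℕ) + 1 then 1 else 0)
      * x (k + 1) = α * x (i + 1) + x i := by
  have : ∀ k : Fin n, (if (i : ℕ) = (k : ℕ) then α else
      if (i : ℕ) = (k : ℕ) + 1 then 1 else 0) * x (k + 1)
      = (if i = k then α * x (i + 1) else 0) + (if (i : ℕ) = (k : ℕ) + 1 then x i else 0) := by
    intro k
    by_cases h1 : i = k
    · subst h1; simp
    · have h2 : (i : ℕ) ≠ k := fun h => h1 (Fin.ext h)
      by_cases h3 : (i : ℕ) = k + 1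
      · simp [h1, h3]
      · simp [h1, h2, h3]
  rw [Finset.sum_congr rfl (fun k _ => this k), Finset.sum_add_distrib]
  congr 1
  · simp
  · rcases Nat.eq_zero_or_pos (i : ℕ) with h | h
    · simp [h, hx]
    · rw [Finset.sum_eq_single (⟨i - 1, by omega⟩ : Fin n)]
      · rw [if_pos]; simp; omega
      · intro b _ hb
        rw [if_neg]
        intro h'
        apply hb
        ext; simp; omega
      · simp

theorem sj_sum2 {n : ℕ} (α : ℍ[ℝ]) (x : ℕ → ℍ[ℝ]) (hx : x 0 = 0) (i : Fin n) :
    ∑ k : Fin n, x (k + 1) *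
      (if (k : ℕ) = (i : ℕ) then α else if (i : ℕ) = (k : ℕ) + 1 then 1 else 0)
       = x (i + 1) * α + x i := by
  have : ∀ k : Fin n, x (k + 1) * (if (k : ℕ) = (i : ℕ) then α else
      if (i : ℕ) = (k : ℕ) + 1 then 1 else 0)
      = (if i = k then x (i + 1) * α else 0) + (if (i : ℕ) = (k : ℕ) + 1 then x i else 0) := by
    intro k
    by_cases h1 : i = k
    · subst h1; simp
    · have h2 : (k : ℕ) ≠ i := fun h => h1 (Fin.ext h.symm)
      by_cases h3 : (i : ℕ) = k + 1
      · simp [h1, h3]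
      · simp [h1, h2, h3]
  rw [Finset.sum_congr rfl (fun k _ => this k), Finset.sum_add_distrib]
  congr 1
  · simp
  · rcases Nat.eq_zero_or_pos (i : ℕ) with h | h
    · simp [h, hx]
    · rw [Finset.sum_eq_single (⟨i - 1, by omega⟩ : Fin n)]
      · rw [if_pos]; simp; omega
      · intro b _ hb
        rw [if_neg]
        intro h'
        apply hb
        ext; simp; omega
      · simp

/-- quaternion analog of Ma's conditions.  Let `α ∼ β` be conjugate
non-real quaternions, `n ≥ m ≥ 1`, `A = 𝒥_n(α)`, `B = 𝒥_m(β)ᵀ`, and `C = [c_{k,j}]` with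
`d_{k,j} = c_{k,j}β − ᾱc_{k,j} + c_{k−1,j} + c_{k,j−1}` (zero conventions for indices
outside the range).  Then `AX − XB = C` is solvable iff for every `j = 1,…,m`:
`Σ_{2ℓ≤j} Im(α)·d_{2ℓ+1,j−2ℓ} + Σ_{ℓ≥1, 2ℓ≤j} d_{2ℓ,j−2ℓ+1}·Im(β) = 0`.
(Indexing of `c, d` is 1-based with truncated subtraction; index `0` realizes the
"nonpositive index ↦ 0" convention.) -/
theorem sylvester_jordan_singular_criterion (n m : ℕ) (hm1 : 1 ≤ m) (hmn : m ≤ n)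
    (α β : ℍ[ℝ]) (hα : α.im ≠ 0) (hβ : β.im ≠ 0)
    (hconj : ∃ h : ℍ[ℝ], h ≠ 0 ∧ α = h⁻¹ * β * h)
    (c : ℕ → ℕ → ℍ[ℝ])
    (hc : ∀ i j, ¬(1 ≤ i ∧ i ≤ n ∧ 1 ≤ j ∧ j ≤ m) → c i j = 0)
    (d : ℕ → ℕ → ℍ[ℝ])
    (hd : ∀ i j, d i j = c i j * β - star α * c i j + c (i - 1) j + c i (j - 1))
    (A : Matrix (Fin n) (Fin n) ℍ[ℝ])
    (hA : A = Matrix.of fun (i j : Fin n) =>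
      if (i : ℕ) = (j : ℕ) then α else if (i : ℕ) = (j : ℕ) + 1 then 1 else 0)
    (B : Matrix (Fin m) (Fin m) ℍ[ℝ])
    (hB : B = Matrix.of fun (i j : Fin m) =>
      if (i : ℕ) = (j : ℕ) then β else if (j : ℕ) = (i : ℕ) + 1 then 1 else 0)
    (C : Matrix (Fin n) (Fin m) ℍ[ℝ])
    (hC : C = Matrix.of fun (i : Fin n) (j : Fin m) => c ((i : ℕ) + 1) ((j : ℕ) + 1)) :
    (∃ X : Matrix (Fin n) (Fin m) ℍ[ℝ], A * X - X * B = C) ↔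
      ∀ j, 1 ≤ j → j ≤ m →
        (∑ ℓ ∈ Finset.range (j + 1), α.im * d (2 * ℓ + 1) (j - 2 * ℓ)) +
          (∑ ℓ ∈ (Finset.range (j + 1)).filter (fun ℓ => 1 ≤ ℓ ∧ 2 * ℓ ≤ j),
            d (2 * ℓ) (j - 2 * ℓ + 1) * β.im) = 0 := by
  obtain ⟨r, hr, hu, hv, hre⟩ := sj_facts α β hα hconj
  have hc1 : ∀ j, c 0 j = 0 := fun j => hc _ _ (by omega)
  have hc2 : ∀ i, c i 0 = 0 := fun i => hc _ _ (by omega)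
  have hcomm : ∀ t : ℍ[ℝ], (β.re : ℍ[ℝ]) * t = t * (β.re : ℍ[ℝ]) :=
    fun t => Quaternion.coe_commutes _ _
  have hαe : α = (β.re : ℍ[ℝ]) + α.im := by rw [← hre, Quaternion.re_add_im]
  have hβe : β = (β.re : ℍ[ℝ]) + β.im := by rw [Quaternion.re_add_im]
  have hsα : star α = (β.re : ℍ[ℝ]) - α.im := by
    conv_lhs => rw [hαe]
    rw [star_add, Quaternion.star_im, Quaternion.star_coe, sub_eq_add_neg]
  have hd' : ∀ i j, d i j = c i j * β.im + α.im * c i j + c (i - 1) j + c i (j - 1) := by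
    intro i j
    have : c i j * β = c i j * β.re + c i j * β.im := by
      conv_lhs => rw [hβe]
      rw [mul_add]
    rw [hd, this, hsα, sub_mul, hcomm]
    abel
  have hL : ∀ t : ℍ[ℝ], α * t - t * β = α.im * t - t * β.im := by
    intro t
    conv_lhs => rw [hβe, hαe]
    rw [add_mul, mul_add, hcomm]
    simp
  -- entrywise form
  have hent : ∀ x : ℕ → ℕ → ℍ[ℝ], (∀ i, x i 0 = 0) → (∀ j, x 0 j = 0) →
      (A * (Matrix.of fun (i : Fin n) (j : Fin m) => x (i + 1) (j + 1)) -
        (Matrix.of fun (i : Fin n) (j : Fin m) => x (i + 1) (j + 1)) * B = C ↔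
      ∀ i j, i < n → j < m → c (i + 1) (j + 1) =
        α.im * x (i + 1) (j + 1) - x (i + 1) (j + 1) * β.im + x i (j + 1) - x (i + 1) j) := by
    intro x hx1 hx2
    have hE : ∀ (i : Fin n) (j : Fin m),
        (A * (Matrix.of fun (i : Fin n) (j : Fin m) => x (i + 1) (j + 1)) -
        (Matrix.of fun (i : Fin n) (j : Fin m) => x (i + 1) (j + 1)) * B) i j =
        α.im * x (i + 1) (j + 1) - x (i + 1) (j + 1) * β.im + x i (j + 1) - x (i + 1) j := by
      intro i j
      rw [← hL, Matrix.sub_apply, Matrix.mul_apply, Matrix.mul_apply, hA, hB]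
      simp only [Matrix.of_apply]
      rw [sj_sum1 α (fun k => x k (j + 1)) (hx2 _) i,
        sj_sum2 β (fun k => x (i + 1) k) (hx1 _) j]
      abel
    constructor
    · intro h i j hi hj
      rw [← hE ⟨i, hi⟩ ⟨j, hj⟩, h, hC]
      rfl
    · intro h
      ext1 i j
      rw [hE, hC, Matrix.of_apply, h i j i.2 j.2]
  constructor
  · rintro ⟨X, hX⟩ J hJ1 hJm
    let x : ℕ → ℕ → ℍ[ℝ] := fun i j =>
      if h : (1 ≤ i ∧ i ≤ n) ∧ (1 ≤ j ∧ j ≤ m) then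
        X ⟨i - 1, by omega⟩ ⟨j - 1, by omega⟩ else 0
    have hx1 : ∀ i, x i 0 = 0 := fun i => by simp [x]
    have hx2 : ∀ j, x 0 j = 0 := fun j => by simp [x]
    have hXx : X = Matrix.of fun (i : Fin n) (j : Fin m) => x (i + 1) (j + 1) := by
      ext1 i j
      rw [Matrix.of_apply]
      simp only [x]
      rw [dif_pos (by omega)]
      rfl
    rw [hXx] at hX
    have h := (hent x hx1 hx2).1 hX
    rw [sj_core α.im β.im r hu hv c d x hc1 hc2 hd' hx1 (by simp [hx2]) J hJ1
      (fun i j hi hj => h i j (by omega) (by omega))]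
    simp [hx2]
  · intro H
    obtain ⟨x, hx1, hxk, hx⟩ := sj_all α.im β.im (sj_decomp _ _ r hr hu hv) c
    have hz : ∀ j, j ≤ m → x 0 j = 0 := by
      intro j
      induction j with
      | zero => intro _; exact hx1 0
      | succ j ih =>
        intro hj
        have h := H (j + 1) (by omega) hj
        rw [sj_core α.im β.im r hu hv c d x hc1 hc2 hd' hx1 hxk (j + 1) (by omega)
          (fun i j _ _ => hx i j), Nat.add_sub_cancel, ih (by omega)] at h
        simpa [hr] using h
    refine ⟨_, (hent (fun i j => if i = 0 then 0 else x i j) ?_ ?_).2 ?_⟩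
    · intro i; simp [hx1]
    · intro j; simp
    · intro i j hi hj
      have h := hx i j
      by_cases h0 : i = 0
      · subst h0
        rw [hz (j + 1) (by omega)] at h
        simpa using h
      · simpa [h0] using h
end

section
/- Let 𝛂 = (α_1,…,α_n) and 𝛃 = (β_1,…,β_m), m ≤ n, be spherical chains in the same conjugacy class of ℍ, let A = 𝒥_𝛂 be the lower bidiagonal matrix with diagonal α_1,…,α_n and ones on the first subdiagonal, and let B = 𝒥_𝛃ᵀ be the upper bidiagonal matrix with diagonal β_1,…,β_m and ones on the first superdiagonal. Given quaternions μ_1, …, μ_m with α_n μ_j = μ_j β_j for each j, define Y = [Y_{k,j}] ∈ ℍ^{n×m} by: Y_{k,j} = 0 whenever k + j ≤ n; Y_{n,1} = μ_1; for n−m+1 ≤ k ≤ n−1 and k + j ≥ n + 1, Y_{k,j} = (ᾱ_{k+1} − α_k)⁻¹[ Y_{k+1,j−1}(β̄_j − β_{j−1}) − Y_{k+1,j−2} + Y_{k−1,j} ] (terms with a nonpositive index being 0); and for j = 1, …, m−1, Y_{n,j+1} = μ_{j+1} − Σ_{ℓ=1}^{j} (ᾱ_n − α_{n−1})⁻¹(ᾱ_{n−1}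 − α_{n−2})⁻¹ ⋯ (ᾱ_{n−ℓ+1} − α_{n−ℓ})⁻¹ · Y_{n−ℓ+1,j}. Then Y satisfies the homogeneous Sylvester equation AY − YB = 0; and conversely every Y ∈ ℍ^{n×m} with AY − YB = 0 arises in this way from some μ_1, …, μ_m with α_n μ_j = μ_j β_j. -/
open Quaternion Matrix

theorem aux_sum_left (n i : ℕ) (hi : i < n) (a : ℍ[ℝ]) (f : ℕ → ℍ[ℝ]) (hf : f 0 = 0) :
    ∑ l ∈ Finset.range n, (if i = l then a else if i = l + 1 then 1 else 0) * f (l + 1)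
      = a * f (i + 1) + f i := by
  have h : ∀ l ∈ Finset.range n,
      (if i = l then a else if i = l + 1 then (1 : ℍ[ℝ]) else 0) * f (l + 1)
        = (if i = l then a * f (i + 1) else 0) + (if i = l + 1 then f i else 0) := by
    intro l _
    by_cases h1 : i = l
    · subst h1; simp
    · by_cases h2 : i = l + 1
      · subst h2; simp
      · simp [h1, h2]
  rw [Finset.sum_congr rfl h, Finset.sum_add_distrib]
  congr 1
  · simp [hi]
  · rcases i with _ | i
    · simp [hf]
    · have : i < n := by omega
      simp [this]

theorem aux_sum_right (n i : ℕ) (hi : i < n) (b : ℕ → ℍ[ℝ]) (f : ℕ → ℍ[ℝ]) (hf : f 0 = 0) :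
    ∑ l ∈ Finset.range n, f (l + 1) * (if l = i then b (l + 1) else if i = l + 1 then 1 else 0)
      = f (i + 1) * b (i + 1) + f i := by
  have h : ∀ l ∈ Finset.range n,
      f (l + 1) * (if l = i then b (l + 1) else if i = l + 1 then (1 : ℍ[ℝ]) else 0)
        = (if i = l then f (i + 1) * b (i + 1) else 0) + (if i = l + 1 then f i else 0) := by
    intro l _
    by_cases h1 : l = i
    · subst h1; simp
    · by_cases h2 : i = l + 1
      · subst h2; simp
      · simp [h1, h2, Ne.symm h1]
  rw [Finset.sum_congr rfl h, Finset.sum_add_distrib]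
  congr 1
  · simp [hi]
  · rcases i with _ | i
    · simp [hf]
    · have : i < n := by omega
      simp [this]

/-- entrywise residual -/
noncomputable def EE (α β : ℕ → ℍ[ℝ]) (y : ℕ → ℕ → ℍ[ℝ]) (k j : ℕ) : ℍ[ℝ] :=
  α k * y k j + y (k - 1) j - y k j * β j - y k (j - 1)

/-- residual of the recursion -/
noncomputable def RR (α β : ℕ → ℍ[ℝ]) (y : ℕ → ℕ → ℍ[ℝ]) (k j : ℕ) : ℍ[ℝ] :=
  y (k + 1) (j - 1) * (star (β j) - β (j - 1)) - y (k + 1) (j - 2) + y (k - 1) j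
    - (star (α (k + 1)) - α k) * y k j

theorem aux_matrix (n m : ℕ) (α β : ℕ → ℍ[ℝ]) (y : ℕ → ℕ → ℍ[ℝ])
    (h0 : ∀ i, y i 0 = 0) (h0' : ∀ j, y 0 j = 0) (Y : Matrix (Fin n) (Fin m) ℍ[ℝ])
    (hY : ∀ (i : Fin n) (j : Fin m), Y i j = y ((i : ℕ) + 1) ((j : ℕ) + 1)) :
    (Matrix.of fun (i j : Fin n) =>
      if (i : ℕ) = (j : ℕ) then α ((i : ℕ) + 1)
      else if (i : ℕ) = (j : ℕ) + 1 then 1 else 0) * Y -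
    Y * (Matrix.of fun (i j : Fin m) =>
      if (i : ℕ) = (j : ℕ) then β ((i : ℕ) + 1)
      else if (j : ℕ) = (i : ℕ) + 1 then 1 else 0) = 0 ↔
    ∀ k j, 1 ≤ k → k ≤ n → 1 ≤ j → j ≤ m → EE α β y k j = 0 := by
  have key : ∀ (i : Fin n) (j : Fin m), ((Matrix.of fun (i j : Fin n) =>
      if (i : ℕ) = (j : ℕ) then α ((i : ℕ) + 1)
      else if (i : ℕ) = (j : ℕ) + 1 then 1 else 0) * Y -
    Y * (Matrix.of fun (i j : Fin m) =>
      if (i : ℕ) = (j : ℕ) then β ((i : ℕ) + 1)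
      else if (j : ℕ) = (i : ℕ) + 1 then 1 else 0)) i j = EE α β y (i + 1) (j + 1) := by
    intro i j
    rw [Matrix.sub_apply, Matrix.mul_apply, Matrix.mul_apply]
    simp only [Matrix.of_apply, hY]
    have e1 := Fin.sum_univ_eq_sum_range (fun l => (if (i : ℕ) = l then α ((i : ℕ) + 1)
      else if (i : ℕ) = l + 1 then 1 else 0) * y (l + 1) (j + 1)) n
    have e2 := Fin.sum_univ_eq_sum_range (fun l => y (i + 1) (l + 1) * (if l = (j : ℕ)
      then β (l + 1) else if (j : ℕ) = l + 1 then 1 else 0)) m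
    rw [e1, e2, aux_sum_left n i i.2 _ (fun l => y l (j + 1)) (h0' _),
      aux_sum_right m j j.2 β (fun l => y (i + 1) l) (h0 _)]
    simp only [EE, Nat.add_sub_cancel]
    abel
  constructor
  · intro h k j hk hkn hj hjm
    have := key ⟨k - 1, by omega⟩ ⟨j - 1, by omega⟩
    rw [h] at this
    simp only [Nat.sub_add_cancel hk, Nat.sub_add_cancel hj] at this
    exact this.symm
  · intro h
    ext1 i j
    rw [key]
    exact h _ _ (by omega) (by omega) (by omega) (by omega)

/-- `a` has real part `t/2` and squared norm `N`. -/
def Sph (t N : ℝ) (a : ℍ[ℝ]) : Prop := star a = t • 1 - a ∧ a * a = t • a - N • 1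

theorem sph_self (a : ℍ[ℝ]) : Sph (2 * a.re) (a.re^2 + a.imI^2+a.imJ^2+a.imK^2) a := by
  constructor <;> ext <;> simp <;> ring

theorem sph_conj {t N : ℝ} {a h : ℍ[ℝ]} (hh : h ≠ 0) (ha : Sph t N a) :
    Sph t N (h⁻¹ * a * h) := by
  have hr : (h⁻¹ * a * h).re = a.re := by
    have : ∀ x y : ℍ[ℝ], (x * y).re = (y * x).re := by
      intro x y; simp; ring
    rw [this, ← mul_assoc, mul_inv_cancel₀ hh, one_mul]
  have ht : t = 2 * a.re := by
    have := congrArg (fun q : ℍ[ℝ] => q.re) ha.1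
    simp at this; linarith
  constructor
  · rw [ht, ← hr]; exact (sph_self _).1
  · have : h⁻¹ * a * h * (h⁻¹ * a * h) = h⁻¹ * (a * a) * h := by
      rw [show h⁻¹ * a * h * (h⁻¹ * a * h) = h⁻¹ * a * (h * h⁻¹) * a * h by noncomm_ring,
        mul_inv_cancel₀ hh]; noncomm_ring
    rw [this, ha.2, mul_sub, sub_mul]
    simp [hh]

theorem RR_eq {t N : ℝ} (α β : ℕ → ℍ[ℝ]) (y : ℕ → ℕ → ℍ[ℝ]) (k j : ℕ)
    (ha : Sph t N (α (k + 1))) (hb : Sph t N (β j)) :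
    RR α β y k j = EE α β y k j + EE α β y (k + 1) (j - 1)
      - (star (α (k + 1)) * EE α β y (k + 1) j - EE α β y (k + 1) j * β j) := by
  have e1 : α (k + 1) * (α (k + 1) * y (k + 1) j) = (t • α (k + 1) - N • 1) * y (k + 1) j := by
    rw [← ha.2, mul_assoc]
  have e2 : y (k + 1) j * β j * β j = y (k + 1) j * (t • β j - N • 1) := by
    rw [← hb.2, mul_assoc]
  simp only [RR, EE, ha.1, hb.1, Nat.add_sub_cancel, Nat.sub_sub, Nat.reduceAdd]
  simp only [mul_add, add_mul, mul_sub, sub_mul, smul_mul_assoc, mul_smul_comm, one_mul,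
    mul_one, e1, e2]
  simp only [mul_assoc]
  module

theorem d_comm {t N : ℝ} {a b : ℍ[ℝ]} (ha : Sph t N a) (hb : Sph t N b)
    (hd : star a - b ≠ 0) : a * (star a - b)⁻¹ = (star a - b)⁻¹ * b := by
  have : (star a - b) * a = b * (star a - b) := by
    rw [ha.1]
    simp only [mul_sub, sub_mul, ha.2, hb.2, smul_mul_assoc, mul_smul_comm, one_mul, mul_one]
    module
  have h2 : (star a - b)⁻¹ * ((star a - b) * a) * (star a - b)⁻¹
      = (star a - b)⁻¹ * (b * (star a - b)) * (star a - b)⁻¹ := by rw [this]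
  rw [← mul_assoc, inv_mul_cancel₀ hd, one_mul, mul_assoc, mul_assoc, mul_inv_cancel₀ hd,
    mul_one] at h2
  exact h2

theorem step {t N : ℝ} (α β : ℕ → ℍ[ℝ]) (y : ℕ → ℕ → ℍ[ℝ]) (k j : ℕ)
    (ha : Sph t N (α (k + 1))) (hb : Sph t N (β (j + 1)))
    (hR : RR α β y k (j + 1) = 0) (hE : EE α β y (k + 1) j = 0) :
    α k * y (k + 1) j - y (k + 1) j * β (j + 1) =
      (star (α (k + 1)) - α k) * (y k (j + 1) - y (k + 1) j) - (y (k - 1) (j + 1) - y k j) := by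
  rw [← sub_eq_zero]
  have : RR α β y k (j + 1) - EE α β y (k + 1) j = 0 := by rw [hR, hE, sub_zero]
  rw [← this]
  simp only [RR, EE, ha.1, hb.1, Nat.add_sub_cancel, show j + 1 - 2 = j - 1 by omega]
  simp only [mul_add, add_mul, mul_sub, sub_mul, smul_mul_assoc, mul_smul_comm, one_mul,
    mul_one]
  module

/-- the products of inverses -/
noncomputable def PP (α : ℕ → ℍ[ℝ]) (n l : ℕ) : ℍ[ℝ] :=
  ((List.range l).map fun t => (star (α (n - t)) - α (n - t - 1))⁻¹).prod

theorem PP_succ (α : ℕ → ℍ[ℝ]) (n l : ℕ) :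
    PP α n (l + 1) = PP α n l * (star (α (n - l)) - α (n - l - 1))⁻¹ := by
  simp [PP, List.range_succ]

theorem PP_comm {t N : ℝ} (n : ℕ) (α : ℕ → ℍ[ℝ])
    (ha : ∀ k, 1 ≤ k → k ≤ n → Sph t N (α k))
    (hd : ∀ k, 1 ≤ k → k < n → star (α (k + 1)) - α k ≠ 0) (l : ℕ) (hl : l < n) :
    α n * PP α n l = PP α n l * α (n - l) := by
  induction l with
  | zero => simp [PP]
  | succ l ih =>
    have hd' := hd (n - l - 1) (by omega) (by omega)
    rw [Nat.sub_add_cancel (by omega)] at hd'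
    rw [PP_succ, ← mul_assoc, ih (by omega), mul_assoc,
      d_comm (ha (n - l) (by omega) (by omega)) (ha (n - l - 1) (by omega) (by omega)) hd',
      mul_assoc, show n - (l + 1) = n - l - 1 by omega]

theorem telescope {t N : ℝ} (n m : ℕ) (hmn : m ≤ n) (α β : ℕ → ℍ[ℝ])
    (ha : ∀ k, 1 ≤ k → k ≤ n → Sph t N (α k)) (hb : ∀ k, 1 ≤ k → k ≤ m → Sph t N (β k))
    (hd : ∀ k, 1 ≤ k → k < n → star (α (k + 1)) - α k ≠ 0)
    (y : ℕ → ℕ → ℍ[ℝ]) (j : ℕ) (hjm : j + 1 ≤ m)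
    (hR : ∀ k, 1 ≤ k → k < n → RR α β y k (j + 1) = 0)
    (hE : ∀ k, 1 ≤ k → k ≤ n → EE α β y k j = 0) (L : ℕ) (hL : L ≤ j) :
    α n * (∑ l ∈ Finset.Icc 1 L, PP α n l * y (n - l + 1) j)
      - (∑ l ∈ Finset.Icc 1 L, PP α n l * y (n - l + 1) j) * β (j + 1)
      = (y (n - 1) (j + 1) - y n j)
        - PP α n L * (y (n - L - 1) (j + 1) - y (n - L) j) := by
  induction L with
  | zero => simp [PP]
  | succ L ih =>
    rw [Finset.sum_Icc_succ_top (by omega), mul_add, add_mul, add_sub_add_comm,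
      ih (by omega)]
    obtain ⟨k, hk⟩ : ∃ k, n = k + 1 + L := ⟨n - 1 - L, by omega⟩
    have hk1 : 1 ≤ k := by omega
    have e := step α β y k j (ha (k + 1) (by omega) (by omega))
      (hb (j + 1) (by omega) hjm) (hR k hk1 (by omega)) (hE (k + 1) (by omega) (by omega))
    have c := PP_comm n α ha hd (L + 1) (by omega)
    have p := PP_succ α n L
    have hd' := hd k hk1 (by omega)
    have i1 : n - L = k + 1 := by omega
    have i2 : n - (L + 1) = k := by omega
    rw [i2] at c
    rw [i1, Nat.add_sub_cancel] at p
    rw [i2, i1, Nat.add_sub_cancel, ← mul_assoc, c, mul_assoc, mul_assoc, ← mul_sub, e]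
    have q : ∀ x, PP α n (L + 1) * ((star (α (k + 1)) - α k) * x) = PP α n L * x := by
      intro x
      rw [p, mul_assoc, ← mul_assoc _ _ x, inv_mul_cancel₀ hd', one_mul]
    rw [mul_sub (PP α n (L + 1)), q]
    abel

/-- parametrization of homogeneous solutions.  With spherical chains
`𝛂 = (α_1,…,α_n)`, `𝛃 = (β_1,…,β_m)`, `m ≤ n`, in the same conjugacy class, `A = 𝒥_𝛂`
lower bidiagonal and `B = 𝒥_𝛃ᵀ` upper bidiagonal, a matrix `Y ∈ ℍ^{n×m}` satisfies
`AY − YB = 0` if and only if its entries arise, via the recipe (5.3)–(5.5) of the paper,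
from parameters `μ_1, …, μ_m` with `α_n μ_j = μ_j β_j`.
(All indexing of `α, β, y, μ` is 1-based, with index `0` realizing the
"nonpositive index ↦ 0" convention; the matrices are indexed by `Fin`.) -/
theorem homogeneous_solutions_parametrization (n m : ℕ) (hmn : m ≤ n) (α β : ℕ → ℍ[ℝ])
    (hαconj : ∀ i j, 1 ≤ i → i ≤ n → 1 ≤ j → j ≤ n →
      ∃ h : ℍ[ℝ], h ≠ 0 ∧ α i = h⁻¹ * α j * h)
    (hβconj : ∀ i j, 1 ≤ i → i ≤ m → 1 ≤ j → j ≤ m →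
      ∃ h : ℍ[ℝ], h ≠ 0 ∧ β i = h⁻¹ * β j * h)
    (hαβconj : ∀ i j, 1 ≤ i → i ≤ n → 1 ≤ j → j ≤ m →
      ∃ h : ℍ[ℝ], h ≠ 0 ∧ α i = h⁻¹ * β j * h)
    (hαchain : ∀ k, 1 ≤ k → k < n → α (k + 1) ≠ star (α k))
    (hβchain : ∀ k, 1 ≤ k → k < m → β (k + 1) ≠ star (β k))
    (A : Matrix (Fin n) (Fin n) ℍ[ℝ])
    (hA : A = Matrix.of fun (i j : Fin n) =>
      if (i : ℕ) = (j : ℕ) then α ((i : ℕ) + 1)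
      else if (i : ℕ) = (j : ℕ) + 1 then 1 else 0)
    (B : Matrix (Fin m) (Fin m) ℍ[ℝ])
    (hB : B = Matrix.of fun (i j : Fin m) =>
      if (i : ℕ) = (j : ℕ) then β ((i : ℕ) + 1)
      else if (j : ℕ) = (i : ℕ) + 1 then 1 else 0) :
    ∀ Y : Matrix (Fin n) (Fin m) ℍ[ℝ],
      A * Y - Y * B = 0 ↔
        ∃ (y : ℕ → ℕ → ℍ[ℝ]) (μ : ℕ → ℍ[ℝ]),
          (∀ i, y i 0 = 0) ∧ (∀ j, y 0 j = 0) ∧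
          (∀ j, 1 ≤ j → j ≤ m → α n * μ j = μ j * β j) ∧
          (∀ k j, 1 ≤ k → k ≤ n → 1 ≤ j → j ≤ m → k + j ≤ n → y k j = 0) ∧
          (y n 1 = μ 1) ∧
          (∀ k j, n - m + 1 ≤ k → k ≤ n - 1 → 1 ≤ j → j ≤ m → n + 1 ≤ k + j →
            y k j = (star (α (k + 1)) - α k)⁻¹ *
              (y (k + 1) (j - 1) * (star (β j) - β (j - 1)) - y (k + 1) (j - 2) +
                y (k - 1) j)) ∧
          (∀ j, 1 ≤ j → j ≤ m - 1 →
            y n (j + 1) = μ (j + 1) - ∑ ℓ ∈ Finset.Icc 1 j,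
              (((List.range ℓ).map fun t => (star (α (n - t)) - α (n - t - 1))⁻¹).prod) *
                y (n - ℓ + 1) j) ∧
          (∀ (i : Fin n) (j : Fin m), Y i j = y ((i : ℕ) + 1) ((j : ℕ) + 1)) := by
  subst hA hB
  have hd : ∀ k, 1 ≤ k → k < n → star (α (k + 1)) - α k ≠ 0 := by
    intro k h1 h2 h
    apply hαchain k h1 h2
    rw [← sub_eq_zero.mp h, star_star]
  obtain ⟨t, N, ha, hb⟩ : ∃ t N : ℝ, (∀ k, 1 ≤ k → k ≤ n → Sph t N (α k)) ∧
      (∀ k, 1 ≤ k → k ≤ m → Sph t N (β k)) := by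
    rcases Nat.eq_zero_or_pos n with hn | hn
    · exact ⟨0, 0, fun k _ _ => by omega, fun k _ _ => by omega⟩
    · refine ⟨2 * (α n).re, (α n).re^2 + (α n).imI^2 + (α n).imJ^2 + (α n).imK^2,
        fun k h1 h2 => ?_, fun k h1 h2 => ?_⟩
      · obtain ⟨h, hh, e⟩ := hαconj k n h1 h2 hn le_rfl
        rw [e]
        exact sph_conj hh (sph_self (α n))
      · obtain ⟨h, hh, e⟩ := hαβconj n k hn le_rfl h1 h2
        have e' : β k = h⁻¹⁻¹ * α n * h⁻¹ := by
          rw [e, inv_inv, ← mul_assoc, ← mul_assoc, mul_inv_cancel₀ hh, one_mul, mul_assoc,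
            mul_inv_cancel₀ hh, mul_one]
        rw [e']
        exact sph_conj (inv_ne_zero hh) (sph_self (α n))
  intro Y
  constructor
  · intro hY
    let y : ℕ → ℕ → ℍ[ℝ] := fun k j =>
      if h : (1 ≤ k ∧ k ≤ n) ∧ (1 ≤ j ∧ j ≤ m) then
        Y ⟨k - 1, by omega⟩ ⟨j - 1, by omega⟩ else 0
    have h0 : ∀ i, y i 0 = 0 := fun i => by simp [y]
    have h0' : ∀ j, y 0 j = 0 := fun j => by simp [y]
    have hYy : ∀ (i : Fin n) (j : Fin m), Y i j = y ((i : ℕ) + 1) ((j : ℕ) + 1) := by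
      intro i j
      have h : (1 ≤ (i : ℕ) + 1 ∧ (i : ℕ) + 1 ≤ n) ∧ (1 ≤ (j : ℕ) + 1 ∧ (j : ℕ) + 1 ≤ m) := by
        omega
      simp only [y, dif_pos h]
      rfl
    clear_value y
    rw [aux_matrix n m α β y h0 h0' Y hYy] at hY
    have hE : ∀ k j, k ≤ n → j ≤ m → EE α β y k j = 0 := by
      intro k j hk hj
      rcases Nat.eq_zero_or_pos k with rfl | hk0
      · simp [EE, h0']
      rcases Nat.eq_zero_or_pos j with rfl | hj0
      · simp [EE, h0]
      exact hY k j hk0 hk hj0 hj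
    have hR : ∀ k j, k < n → 1 ≤ j → j ≤ m → RR α β y k j = 0 := by
      intro k j hk hj hjm
      rw [RR_eq α β y k j (ha _ (by omega) (by omega)) (hb _ hj hjm), hE _ _ (by omega) hjm,
        hE _ _ (by omega) hjm, hE _ _ (by omega) (by omega)]
      simp
    have hz : ∀ j, j ≤ m → ∀ k, k + j ≤ n → y k j = 0 := by
      intro j
      induction j using Nat.strong_induction_on with
      | _ j ihj =>
        intro hjm k
        rcases Nat.eq_zero_or_pos j with rfl | hj0
        · intro _; exact h0 k
        induction k with
        | zero => intro _; exact h0' j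
        | succ k ihk =>
          intro hkj
          have r := hR (k + 1) j (by omega) hj0 hjm
          have z1 : y (k + 1 + 1) (j - 1) = 0 := ihj _ (by omega) (by omega) _ (by omega)
          have z2 : y (k + 1 + 1) (j - 2) = 0 := by
            rcases Nat.eq_zero_or_pos (j - 2) with h | h
            · rw [h]; exact h0 _
            · exact ihj _ (by omega) (by omega) _ (by omega)
          have z3 : y (k + 1 - 1) j = 0 := ihk (by omega)
          simp only [RR, z1, z2, z3, zero_mul, sub_zero, zero_add, zero_sub, neg_eq_zero] at r
          exact (mul_eq_zero.mp r).resolve_left (hd _ (by omega) (by omega))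
    refine ⟨y, fun j => y n j + ∑ l ∈ Finset.Icc 1 (j - 1), PP α n l * y (n - l + 1) (j - 1),
      h0, h0', ?_, fun k j _ _ _ hjm h => hz j hjm k h, by simp, ?_, ?_, hYy⟩
    · intro j hj hjm
      obtain ⟨j, rfl⟩ : ∃ i, j = i + 1 := ⟨j - 1, by omega⟩
      have T := telescope n m hmn α β ha hb hd y j hjm
        (fun k _ h => hR k _ h (by omega) hjm) (fun k _ h => hE k j h (by omega)) j le_rfl
      rw [hz (j + 1) hjm (n - j - 1) (by omega), hz j (by omega) (n - j) (by omega)] at T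
      have e := hE n (j + 1) le_rfl hjm
      simp only [EE, Nat.add_sub_cancel] at e ⊢
      rw [mul_add, add_mul, ← sub_eq_zero, add_sub_add_comm, T, ← e]
      noncomm_ring
    · intro k j hk1 hk2 hj hjm _
      have r := hR k j (by omega) hj hjm
      rw [RR, sub_eq_zero] at r
      rw [r, ← mul_assoc, inv_mul_cancel₀ (hd k (by omega) (by omega)), one_mul]
    · intro j hj hjm
      simp only [Nat.add_sub_cancel, PP]
      abel
  · rintro ⟨y, μ, h0, h0', hμ, hz, hy1, hrec, hlast, hYy⟩
    rw [aux_matrix n m α β y h0 h0' Y hYy]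
    have hz' : ∀ j, j ≤ m → ∀ k, k + j ≤ n → y k j = 0 := by
      intro j hjm k hkj
      rcases Nat.eq_zero_or_pos k with rfl | hk0
      · exact h0' j
      rcases Nat.eq_zero_or_pos j with rfl | hj0
      · exact h0 k
      exact hz k j hk0 (by omega) hj0 hjm hkj
    have hR : ∀ k j, k < n → 1 ≤ j → j ≤ m → RR α β y k j = 0 := by
      intro k j hk hj hjm
      by_cases hkj : k + j ≤ n
      · have z2 : y (k + 1) (j - 2) = 0 := by
          rcases Nat.eq_zero_or_pos (j - 2) with h | h
          · rw [h]; exact h0 _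
          · exact hz' _ (by omega) _ (by omega)
        rw [RR, hz' j hjm k hkj, hz' (j - 1) (by omega) (k + 1) (by omega), z2,
          hz' j hjm (k - 1) (by omega)]
        simp
      · have r := hrec k j (by omega) (by omega) hj hjm (by omega)
        rw [RR, sub_eq_zero]
        conv_rhs => rw [r]
        rw [← mul_assoc, mul_inv_cancel₀ (hd k (by omega) (by omega)), one_mul]
    have hE : ∀ j, j ≤ m → ∀ i k, k + i = n → EE α β y k j = 0 := by
      intro j
      induction j with
      | zero => intro _ i k _; simp [EE, h0]
      | succ j ihj =>
        intro hjm i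
        induction i with
        | zero =>
          intro k hk
          obtain rfl : k = n := by omega
          rcases Nat.eq_zero_or_pos j with rfl | hj0
          · have e := hμ 1 le_rfl hjm
            have z := hz' 1 hjm (k - 1) (by omega)
            simp [EE, h0, z, hy1, e]
          · have T := telescope k m hmn α β ha hb hd y j hjm
              (fun l _ h => hR l _ h (by omega) hjm)
              (fun l _ h => ihj (by omega) (k - l) l (by omega)) j le_rfl
            rw [hz' (j + 1) hjm (k - j - 1) (by omega), hz' j (by omega) (k - j) (by omega)] at T
            have e := hμ (j + 1) (by omega) hjm
            have l := hlast j hj0 (by omega)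
            change y k (j + 1) = μ (j + 1) - ∑ l ∈ Finset.Icc 1 j, PP α k l * y (k - l + 1) j at l
            rw [sub_zero, mul_zero, sub_zero] at T
            rw [EE, l, Nat.add_sub_cancel, mul_sub, sub_mul, e]
            rw [← sub_eq_zero] at T
            rw [← neg_eq_zero, ← T]
            abel
        | succ i ihi =>
          intro k hk
          have r := RR_eq α β y k (j + 1) (ha _ (by omega) (by omega)) (hb _ (by omega) hjm)
          rw [hR k (j + 1) (by omega) (by omega) hjm, ihi (k + 1) (by omega),
            Nat.add_sub_cancel, ihj (by omega) i (k + 1) (by omega)] at r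
          simpa using r.symm
    intro k j _ hk _ hj
    exact hE j hj (n - k) k (by omega)
end

section
/- Let α and β be conjugate non-real quaternions, let n ≥ m ≥ 1, and let A = 𝒥_n(α) and B = 𝒥_m(β)ᵀ be quaternion Jordan blocks. A matrix Y = [Y_{k,j}] ∈ ℍ^{n×m} satisfies AY = YB if and only if there exist quaternions μ_1, …, μ_m with αμ_i = μ_iβ for i = 1, …, m such that Y_{k,j} = 0 whenever 2 ≤ k + j ≤ n and Y_{k,j} = μ_{k+j−n} whenever n + 1 ≤ k + j ≤ n + m. In other words, the solutions are exactly the 'triangular' Hankel matrices that vanish on the counter-diagonals k + j ≤ n and are constant on each counter-diagonal k + j = n + i with value μ_i satisfying αμ_i = μ_iβ. -/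
open Quaternion Matrix


theorem comm_aux (b z : ℍ[ℝ]) (hb : b.im ≠ 0)
    (h : b * (b * z - z * b) - (b * z - z * b) * b = 0) : b * z - z * b = 0 := by
  have hs : b.im ^ 2 = -((normSq b.im : ℝ) : ℍ[ℝ]) := Quaternion.im_sq b
  have hb' : b = (b.re : ℍ[ℝ]) + b.im := (Quaternion.re_add_im b).symm
  have key : ∀ w : ℍ[ℝ], b * w - w * b = b.im * w - w * b.im := by
    intro w
    have hc : (b.re : ℍ[ℝ]) * w = w * (b.re : ℍ[ℝ]) := (Quaternion.coe_commutes b.re w)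
    calc b * w - w * b = ((b.re : ℍ[ℝ]) + b.im) * w - w * ((b.re : ℍ[ℝ]) + b.im) := by
          rw [← hb']
      _ = b.im * w - w * b.im := by
          rw [add_mul, mul_add, hc]; abel
  rw [key] at h
  rw [key] at h ⊢
  generalize b.im = a at *
  generalize normSq a = s at *
  have hc : ∀ w : ℍ[ℝ], (s : ℍ[ℝ]) * w = w * (s : ℍ[ℝ]) := fun w => Quaternion.coe_commutes s w
  set t := a * z - z * a with ht
  -- `t` anticommutes with `a`
  have h1 : a * t + t * a = 0 := by
    have : a * t + t * a = a ^ 2 * z - z * a ^ 2 := by rw [ht]; noncomm_ring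
    rw [this, hs, neg_mul, mul_neg, hc]; simp
  have h2 : (2 : ℍ[ℝ]) * (a * t) = 0 := by
    have : (2 : ℍ[ℝ]) * (a * t) = (a * t + t * a) + (a * t - t * a) := by rw [two_mul]; abel
    rw [this, h1, h, add_zero]
  have h3 : (2 : ℝ) • (a * t) = 0 := by
    rw [two_smul, ← two_mul, h2]
  have h4 : a * t = 0 := (smul_eq_zero.1 h3).resolve_left two_ne_zero
  exact (mul_eq_zero.1 h4).resolve_left hb

theorem sylv_aux (α β x : ℍ[ℝ]) (hβ : β.im ≠ 0)
    (hconj : ∃ h : ℍ[ℝ], h ≠ 0 ∧ α = h⁻¹ * β * h)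
    (H : α * (α * x - x * β) = (α * x - x * β) * β) : α * x = x * β := by
  obtain ⟨h, h0, rfl⟩ := hconj
  have e : ∀ w : ℍ[ℝ], h * (h⁻¹ * β * h * w - w * β) = β * (h * w) - (h * w) * β := by
    intro w
    rw [mul_sub, ← mul_assoc, ← mul_assoc, ← mul_assoc, mul_inv_cancel₀ h0, one_mul, mul_assoc,
      mul_assoc h w]
  have h1 := e (h⁻¹ * β * h * x - x * β)
  rw [sub_eq_zero.2 H, e x, mul_zero] at h1
  have h2 := comm_aux β (h * x) hβ h1.symm
  rw [← e x] at h2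
  rcases mul_eq_zero.1 h2 with h3 | h3
  · exact absurd h3 h0
  · exact sub_eq_zero.1 h3

/-- one-based, zero-padded entries. -/
noncomputable def padE {n m : ℕ} (Y : Matrix (Fin n) (Fin m) ℍ[ℝ]) (k j : ℕ) : ℍ[ℝ] :=
  if h : (1 ≤ k ∧ k ≤ n) ∧ (1 ≤ j ∧ j ≤ m) then Y ⟨k - 1, by omega⟩ ⟨j - 1, by omega⟩ else 0

theorem left_entry {n m : ℕ} (α : ℍ[ℝ]) (Y : Matrix (Fin n) (Fin m) ℍ[ℝ])
    (k : Fin n) (j : Fin m) :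
    ((Matrix.of fun (i j : Fin n) =>
      if (i : ℕ) = (j : ℕ) then α else if (i : ℕ) = (j : ℕ) + 1 then 1 else 0) * Y) k j
      = α * padE Y (k + 1) (j + 1) + padE Y k (j + 1) := by
  rw [Matrix.mul_apply]
  have : ∀ l : Fin n, (Matrix.of fun (i j : Fin n) =>
      if (i : ℕ) = (j : ℕ) then α else if (i : ℕ) = (j : ℕ) + 1 then (1 : ℍ[ℝ]) else 0) k l * Y l j
      = (if k = l then α * Y l j else 0) + (if (k : ℕ) = l + 1 then Y l j else 0) := by
    intro l
    simp only [Matrix.of_apply, Fin.ext_iff]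
    split_ifs <;> first | omega | simp
  rw [Finset.sum_congr rfl fun l _ => this l, Finset.sum_add_distrib, Finset.sum_ite_eq]
  congr 1
  · simp [padE]
  · rcases Nat.eq_zero_or_pos (k : ℕ) with h | h
    · simp [padE, h]
    · have h' : (k : ℕ) - 1 < n := by omega
      rw [Finset.sum_eq_single (⟨(k : ℕ) - 1, h'⟩ : Fin n)]
      · rw [if_pos (by simp; omega), padE, dif_pos (by omega)]; rfl
      · intro b _ hb
        rw [if_neg]
        intro hk
        exact hb (Fin.ext (by simp; omega))
      · simp

theorem right_entry {n m : ℕ} (β : ℍ[ℝ]) (Y : Matrix (Fin n) (Fin m) ℍ[ℝ])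
    (k : Fin n) (j : Fin m) :
    (Y * (Matrix.of fun (i j : Fin m) =>
      if (i : ℕ) = (j : ℕ) then β else if (j : ℕ) = (i : ℕ) + 1 then 1 else 0)) k j
      = padE Y (k + 1) (j + 1) * β + padE Y (k + 1) j := by
  rw [Matrix.mul_apply]
  have : ∀ l : Fin m, Y k l * (Matrix.of fun (i j : Fin m) =>
      if (i : ℕ) = (j : ℕ) then β else if (j : ℕ) = (i : ℕ) + 1 then (1 : ℍ[ℝ]) else 0) l j
      = (if j = l then Y k l * β else 0) + (if (j : ℕ) = l + 1 then Y k l else 0) := by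
    intro l
    simp only [Matrix.of_apply, Fin.ext_iff]
    split_ifs <;> first | omega | simp
  rw [Finset.sum_congr rfl fun l _ => this l, Finset.sum_add_distrib, Finset.sum_ite_eq]
  congr 1
  · simp [padE]
  · rcases Nat.eq_zero_or_pos (j : ℕ) with h | h
    · simp [padE, h]
    · have h' : (j : ℕ) - 1 < m := by omega
      rw [Finset.sum_eq_single (⟨(j : ℕ) - 1, h'⟩ : Fin m)]
      · rw [if_pos (by simp; omega), padE, dif_pos (by omega)]; rfl
      · intro b _ hb
        rw [if_neg]
        intro hk
        exact hb (Fin.ext (by simp; omega))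
      · simp

/-- homogeneous equation for Jordan blocks.  Let `α ∼ β` be conjugate
non-real quaternions, `n ≥ m ≥ 1`, `A = 𝒥_n(α)`, `B = 𝒥_m(β)ᵀ`.  Then `Y ∈ ℍ^{n×m}`
satisfies `AY = YB` if and only if there are `μ_1, …, μ_m` with `αμ_i = μ_iβ` such that
`Y_{k,j} = 0` for `k + j ≤ n` and `Y_{k,j} = μ_{k+j−n}` for `n + 1 ≤ k + j ≤ n + m`
(1-based indices `k, j`; i.e. the solutions are exactly the "triangular" Hankel matrices
with counter-diagonal values in the plane `{μ : αμ = μβ}`). -/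
theorem homogeneous_jordan_hankel (n m : ℕ) (hm1 : 1 ≤ m) (hmn : m ≤ n)
    (α β : ℍ[ℝ]) (hα : α.im ≠ 0) (hβ : β.im ≠ 0)
    (hconj : ∃ h : ℍ[ℝ], h ≠ 0 ∧ α = h⁻¹ * β * h)
    (A : Matrix (Fin n) (Fin n) ℍ[ℝ])
    (hA : A = Matrix.of fun (i j : Fin n) =>
      if (i : ℕ) = (j : ℕ) then α else if (i : ℕ) = (j : ℕ) + 1 then 1 else 0)
    (B : Matrix (Fin m) (Fin m) ℍ[ℝ])
    (hB : B = Matrix.of fun (i j : Fin m) =>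
      if (i : ℕ) = (j : ℕ) then β else if (j : ℕ) = (i : ℕ) + 1 then 1 else 0)
    (Y : Matrix (Fin n) (Fin m) ℍ[ℝ]) :
    A * Y = Y * B ↔
      ∃ μ : ℕ → ℍ[ℝ],
        (∀ i, 1 ≤ i → i ≤ m → α * μ i = μ i * β) ∧
        (∀ (k : Fin n) (j : Fin m),
          (((k : ℕ) + 1) + ((j : ℕ) + 1) ≤ n → Y k j = 0) ∧
          (n + 1 ≤ ((k : ℕ) + 1) + ((j : ℕ) + 1) →
            Y k j = μ ((((k : ℕ) + 1) + ((j : ℕ) + 1)) - n))) := by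
  have hY : ∀ (k : Fin n) (j : Fin m), Y k j = padE Y (k + 1) (j + 1) := by
    intro k j
    rw [padE, dif_pos (by omega)]; rfl
  have hz1 : ∀ j, padE Y 0 j = 0 := by intro j; rw [padE, dif_neg (by omega)]
  have hz2 : ∀ k, padE Y k 0 = 0 := by intro k; rw [padE, dif_neg (by omega)]
  have hE : A * Y = Y * B ↔ ∀ k j, k < n → j < m →
      α * padE Y (k + 1) (j + 1) + padE Y k (j + 1)
        = padE Y (k + 1) (j + 1) * β + padE Y (k + 1) j := by
    constructor
    · intro h k j hk hj
      have := congrFun (congrFun h ⟨k, hk⟩) ⟨j, hj⟩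
      rw [hA, hB, left_entry, right_entry] at this
      exact this
    · intro h
      ext1 k j
      rw [hA, hB, left_entry, right_entry]
      exact h k j k.2 j.2
  rw [hE]
  clear hE hA hB
  constructor
  · intro h
    have hT : ∀ s k j, k + j = s → k ≤ n → j ≤ m → α * padE Y k j = padE Y k j * β := by
      intro s
      induction s with
      | zero =>
        intro k j hs _ _
        obtain rfl : k = 0 := by omega
        simp [hz1]
      | succ s ih =>
        intro k j hs hk hj
        rcases k with _ | k
        · simp [hz1]
        rcases j with _ | j
        · simp [hz2]
        have e := h k j (by omega) (by omega)
        have e1 := ih k (j + 1) (by omega) (by omega) (by omega)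
        have e2 := ih (k + 1) j (by omega) (by omega) (by omega)
        apply sylv_aux α β _ hβ hconj
        have e3 : α * padE Y (k + 1) (j + 1) - padE Y (k + 1) (j + 1) * β
            = padE Y (k + 1) j - padE Y k (j + 1) := by
          rw [sub_eq_sub_iff_add_eq_add, e, add_comm]
        rw [e3, mul_sub, sub_mul, e1, e2]
    have hH : ∀ k j, k < n → j < m → padE Y k (j + 1) = padE Y (k + 1) j := by
      intro k j hk hj
      have e := h k j hk hj
      rw [hT _ (k + 1) (j + 1) rfl (by omega) (by omega)] at e
      exact add_left_cancel e
    have hS : ∀ d k j, k + d ≤ n → j + d ≤ m → padE Y k (j + d) = padE Y (k + d) j := by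
      intro d
      induction d with
      | zero => intro k j _ _; rfl
      | succ d ih =>
        intro k j hk hj
        rw [← add_assoc, hH k (j + d) (by omega) (by omega), ih (k + 1) j (by omega) (by omega)]
        congr 1; omega
    refine ⟨fun i => padE Y n i, fun i _ hi => hT _ n i rfl le_rfl hi, fun k j => ⟨?_, ?_⟩⟩
    · intro hkj
      have := hS (j + 1) (k + 1) 0 (by omega) (by omega)
      rw [zero_add, hz2] at this
      rw [hY, this]
    · intro hkj
      have := hS (n - (k + 1)) (k + 1) ((k : ℕ) + 1 + (j + 1) - n) (by omega) (by omega)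
      rw [hY]
      convert this using 2 <;> omega
  · rintro ⟨μ, hμ, hYμ⟩
    have g0 : ∀ k j, k + j ≤ n → padE Y k j = 0 := by
      intro k j hkj
      by_cases hc : (1 ≤ k ∧ k ≤ n) ∧ (1 ≤ j ∧ j ≤ m)
      · rw [padE, dif_pos hc]
        exact (hYμ _ _).1 (by simp; omega)
      · rw [padE, dif_neg hc]
    have g1 : ∀ k j, k ≤ n → j ≤ m → n + 1 ≤ k + j → padE Y k j = μ (k + j - n) := by
      intro k j hk hj hkj
      have hc : (1 ≤ k ∧ k ≤ n) ∧ (1 ≤ j ∧ j ≤ m) := by omega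
      rw [padE, dif_pos hc, (hYμ _ _).2 (by simp; omega)]
      congr 1; simp; omega
    intro k j hk hj
    have a1 : α * padE Y (k + 1) (j + 1) = padE Y (k + 1) (j + 1) * β := by
      rcases le_or_gt (k + 1 + (j + 1)) n with hl | hl
      · simp [g0 _ _ hl]
      · rw [g1 _ _ (by omega) (by omega) hl]
        exact hμ _ (by omega) (by omega)
    have a2 : padE Y k (j + 1) = padE Y (k + 1) j := by
      rcases le_or_gt (k + (j + 1)) n with hl | hl
      · rw [g0 _ _ hl, g0 _ _ (by omega)]
      · rw [g1 _ _ (by omega) (by omega) hl, g1 _ _ (by omega) (by omega) (by omega)]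
        congr 1; omega
    rw [a1, a2]
end
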